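/- With the setup below for a translation invariant linear equation L in s = 3 variables: let ε_1, ε_2 > 0 be real numbers, let Spec_{ε_1}(f_{A'}) = {t ∈ ℤ/Pℤ : |f̂_{A'}(t)| > ε_1} and S = ⋃_{i=1}^3 c_i c_1^{−1}·Spec_{ε_1}(f_{A'}). There exist a constant C > 0 and a threshold N_1, depending only on F, L and c_0, such that if N ≥ N_1 and B ⊆ ℤ/Pℤ satisfies |f̂_B(t) − 1| ≤ ε_2 for every t ∈ S, then |Λ_L(f_{A'}) − Λ_L(f_{A'} * f_B)| ≤ C·(ε_2 + ε_1^{1/2})·δ^{−6}·P^{2}. -/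

import Mathlib

/-!
Fourier expansion on `ℤ/Pℤ` turns `Λ_L(f_{A'}) - Λ_L(f_{A'} * f_B)` into
`P² ∑_t ∏ᵢ f̂_{A'}(cᵢ t) · (1 - ∏ᵢ f̂_B(cᵢ t))`. At the frequencies in the large spectrum of
`f_{A'}` the factor `1 - ∏ᵢ f̂_B(cᵢ t)` is `O(ε₂)`; at the others half a power of `|f̂_{A'}|` is
worth `ε₁^{1/2}`. What is left is, by the inequality of arithmetic and geometric means, at most the
moment `∑_t |f̂_{A'}(t)|^{5/2}`, which has to be bounded independently of `N`.

The moment bound is a restriction estimate obtained from the large sieve. The set `A_{b₀}` avoids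
`k` residue classes modulo each prime of an interval `(z, y]`, so by Montgomery's argument its
exponential sum `S` at a frequency `α` is controlled by its values at the translates of `α` by
fractions with denominators composed of these primes. For a well-spaced set `Θ` of frequencies one
discards a prime for each pair of elements of `Θ`, after which all the translates are still well
spaced, and the large sieve shows that `∑_{α ∈ Θ} |S(α)|²` grows no faster than a small power of
`|Θ|`. This bounds the number of frequencies at which `|S|` is large, hence the moment.
-/

/-- The primorial of a real number `z`: the product of all primes `p ≤ z`. -/
noncomputable def primor (z : ℝ) : ℕ :=
  ∏ p ∈ (Finset.range (⌊z⌋₊ + 1)).filter Nat.Prime, p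

/-- `S_F(N, z)`: the set of natural numbers `n ≤ N` with `gcd(F(n), P(z)) = 1`. -/
noncomputable def SFset (F : ℤ → ℤ) (N : ℕ) (z : ℝ) : Finset ℕ :=
  (Finset.Icc 1 N).filter (fun n => Int.gcd (F n) (primor z) = 1)

/-- `A_b = {n : b + nM ∈ A}` (automatically contained in `[0, N]`). -/
def Abset (A : Finset ℕ) (N M b : ℕ) : Finset ℕ :=
  (Finset.range (N + 1)).filter (fun n => b + n * M ∈ A)

/-- `f_C = d(C)⁻¹ · 1_C`, where `d(C) = |C|/P`. -/
noncomputable def fCfun {P : ℕ} (C : Finset (ZMod P)) : ZMod P → ℝ :=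
  fun n => ((P : ℝ) / (C.card : ℝ)) * (if n ∈ C then 1 else 0)

/-- Convolution `(f*g)(n) = P⁻¹ ∑_y f(n−y) g(y)` on `ℤ/Pℤ`. -/
noncomputable def convP {P : ℕ} [Fact P.Prime] (f g : ZMod P → ℝ) : ZMod P → ℝ :=
  fun n => (1 / (P : ℝ)) * ∑ y : ZMod P, f (n - y) * g y

/-- `Λ_L(f) = ∑_{c₁n₁+⋯+cₛnₛ=0} ∏ f(nᵢ)`. -/
noncomputable def LamL {P : ℕ} [Fact P.Prime] {s : ℕ} (cc : Fin s → ℤ)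
    (f : ZMod P → ℝ) : ℝ :=
  ∑ n ∈ Finset.univ.filter
      (fun n : Fin s → ZMod P => ∑ i, (cc i : ZMod P) * n i = 0),
    ∏ i, f (n i)

/-- The Fourier transform `f̂(t) = P⁻¹ ∑_y f(y) e^{2πity/P}`. -/
noncomputable def FTP {P : ℕ} [Fact P.Prime] (f : ZMod P → ℝ) : ZMod P → ℂ :=
  fun t => (1 / (P : ℂ)) * ∑ y : ZMod P, (f y : ℂ) *
    Complex.exp (2 * Real.pi * Complex.I * (t.val : ℂ) * (y.val : ℂ) / (P : ℂ))

section LargeSieve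

open MeasureTheory Metric

lemma norm_fourier_sub_one_le (n : ℤ) (θ : UnitAddCircle) :
    ‖fourier n θ - 1‖ ≤ 2 * Real.pi * |(n : ℝ)| * ‖θ‖ := by
  induction θ using QuotientAddGroup.induction_on with | H x => ?_
  have hround : (x : UnitAddCircle) = ((x - round x : ℝ) : UnitAddCircle) := by
    have hzero : ((round x : ℝ) : UnitAddCircle) = 0 :=
      (AddCircle.coe_eq_zero_iff 1).2 ⟨round x, by simp⟩
    rw [AddCircle.coe_sub, hzero, sub_zero]
  rw [UnitAddCircle.norm_eq, hround, fourier_coe_apply]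
  have h := Real.norm_exp_I_mul_ofReal_sub_one_le (x := 2 * Real.pi * n * (x - round x))
  convert h using 1
  · congr 3; push_cast; ring
  · simp [abs_of_pos Real.pi_pos]

lemma integral_fourier (n : ℤ) :
    ∫ θ : UnitAddCircle, fourier n θ = if n = 0 then 1 else 0 := by
  have h := congrFun (fourierCoeff_fourier (T := 1) n) 0
  simpa [fourierCoeff, AddCircle.integral_haarAddCircle, Pi.single_apply, eq_comm] using h

lemma integrable_continuousMap (f : C(UnitAddCircle, ℂ)) : Integrable f :=
  f.continuous.integrable_of_hasCompactSupport (HasCompactSupport.of_compactSpace _)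

lemma integral_norm_sq_sum_fourier (X : Finset ℤ) (b : ℤ → ℂ) :
    ∫ θ : UnitAddCircle, ‖∑ n ∈ X, b n * fourier n θ‖ ^ 2 = ∑ n ∈ X, ‖b n‖ ^ 2 := by
  have hexpand (θ : UnitAddCircle) : ((‖∑ n ∈ X, b n * fourier n θ‖ ^ 2 : ℝ) : ℂ) =
      ∑ n ∈ X, ∑ m ∈ X, b n * starRingEnd ℂ (b m) * fourier (n - m) θ := by
    rw [Complex.ofReal_pow, ← Complex.mul_conj', map_sum, Finset.sum_mul_sum]
    refine Finset.sum_congr rfl fun n _ => Finset.sum_congr rfl fun m _ => ?_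
    rw [map_mul, ← fourier_neg, sub_eq_add_neg, fourier_add]
    ring
  have hint (n m : ℤ) : Integrable fun θ : UnitAddCircle =>
      b n * starRingEnd ℂ (b m) * fourier (n - m) θ :=
    (integrable_continuousMap (fourier (n - m))).const_mul _
  apply Complex.ofReal_injective
  rw [← integral_complex_ofReal, integral_congr_ae (.of_forall hexpand),
    integral_finsetSum _ fun n _ => integrable_finsetSum _ fun m _ => hint n m,
    Complex.ofReal_sum]
  refine Finset.sum_congr rfl fun n hn => ?_
  rw [integral_finsetSum _ fun m _ => hint n m]
  simp_rw [integral_const_mul, integral_fourier, sub_eq_zero, mul_ite, mul_one, mul_zero]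
  rw [Finset.sum_ite_eq, if_pos hn, Complex.mul_conj', Complex.ofReal_pow]

lemma norm_setAverage_sq_le (f : C(UnitAddCircle, ℂ)) {s : Set UnitAddCircle}
    (hs : volume s ≠ 0) :
    volume.real s * ‖⨍ θ in s, f θ‖ ^ 2 ≤ ∫ θ in s, ‖f θ‖ ^ 2 := by
  have hconv : ConvexOn ℝ Set.univ fun w : ℂ => ‖w‖ ^ 2 :=
    (convexOn_norm convex_univ).pow (fun _ _ => norm_nonneg _) 2
  have hint : Integrable fun θ => ‖f θ‖ ^ 2 :=
    (f.continuous.norm.pow 2).integrable_of_hasCompactSupport (HasCompactSupport.of_compactSpace _)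
  have h := hconv.map_set_average_le (continuous_norm.pow 2).continuousOn isClosed_univ hs
    (measure_ne_top _ s) (by simp) (integrable_continuousMap f).integrableOn hint.integrableOn
  rw [setAverage_eq volume (fun θ => ‖f θ‖ ^ 2), smul_eq_mul] at h
  have hpos : 0 < volume.real s := ENNReal.toReal_pos hs (measure_ne_top _ s)
  rwa [← div_eq_inv_mul, le_div_iff₀' hpos] at h

lemma volume_real_closedBall_half {δ : ℝ} (hδ : 0 ≤ δ) (hδ1 : δ ≤ 1) (θ : UnitAddCircle) :
    volume.real (closedBall θ (δ / 2)) = δ := by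
  rw [measureReal_def, AddCircle.volume_closedBall, mul_div_cancel₀ _ two_ne_zero,
    min_eq_right hδ1, ENNReal.toReal_ofReal hδ]

lemma mul_sum_norm_setAverage_sq_le {ι : Type*} {I : Finset ι} {θ : ι → UnitAddCircle} {δ : ℝ}
    (hδ : 0 < δ) (hδ1 : δ ≤ 1) (hsep : ∀ r ∈ I, ∀ s ∈ I, ‖θ r - θ s‖ ≤ δ → r = s)
    (f : C(UnitAddCircle, ℂ)) :
    δ * ∑ r ∈ I, ‖⨍ x in closedBall (θ r) (δ / 2), f x‖ ^ 2 ≤ ∫ x, ‖f x‖ ^ 2 := by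
  have hint : Integrable fun x => ‖f x‖ ^ 2 :=
    (f.continuous.norm.pow 2).integrable_of_hasCompactSupport (HasCompactSupport.of_compactSpace _)
  have hdisj : (I : Set ι).Pairwise
      (Function.onFun Disjoint fun r => closedBall (θ r) (δ / 2)) := by
    intro r hr s hs hrs
    refine Set.disjoint_left.2 fun x hxr hxs => hrs (hsep r hr s hs ?_)
    rw [← dist_eq_norm]
    exact (dist_triangle_right _ _ x).trans
      ((add_le_add (mem_closedBall'.1 hxr) (mem_closedBall'.1 hxs)).trans_eq (add_halves δ))
  calc δ * ∑ r ∈ I, ‖⨍ x in closedBall (θ r) (δ / 2), f x‖ ^ 2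
      ≤ ∑ r ∈ I, ∫ x in closedBall (θ r) (δ / 2), ‖f x‖ ^ 2 := by
        rw [Finset.mul_sum]
        refine Finset.sum_le_sum fun r _ => ?_
        have hvol := volume_real_closedBall_half hδ.le hδ1 (θ r)
        have h := norm_setAverage_sq_le f (s := closedBall (θ r) (δ / 2)) fun h0 =>
          hδ.ne' (by rw [← hvol, measureReal_def, h0, ENNReal.toReal_zero])
        rwa [hvol] at h
    _ = ∫ x in ⋃ r ∈ I, closedBall (θ r) (δ / 2), ‖f x‖ ^ 2 :=
        (integral_biUnion_finset I (fun _ _ => measurableSet_closedBall) hdisj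
          fun _ _ => hint.integrableOn).symm
    _ ≤ ∫ x, ‖f x‖ ^ 2 := setIntegral_le_integral hint (.of_forall fun _ => sq_nonneg _)

lemma setAverage_fourier_closedBall (n : ℤ) (θ : UnitAddCircle) (r : ℝ) :
    ⨍ x in closedBall θ r, fourier n x =
      (⨍ x in closedBall (0 : UnitAddCircle) r, fourier n x) * fourier n θ := by
  have hpre : (fun x => x + θ) ⁻¹' closedBall θ r = closedBall 0 r := by
    ext x; simp [dist_eq_norm]
  have hmp : MeasurePreserving (fun x : UnitAddCircle => x + θ) := measurePreserving_add_right _ θ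
  have hemb : MeasurableEmbedding (fun x : UnitAddCircle => x + θ) := measurableEmbedding_addRight θ
  rw [setAverage_eq, setAverage_eq, ← hmp.setIntegral_preimage_emb hemb, hpre]
  have hvol : volume.real (closedBall θ r) = volume.real (closedBall (0 : UnitAddCircle) r) := by
    simp only [measureReal_def, AddCircle.volume_closedBall]
  simp only [hvol, fourier_apply, smul_add, AddCircle.toCircle_add, Circle.coe_mul,
    integral_mul_const, smul_mul_assoc]

lemma norm_setAverage_fourier_sub_one_le {n : ℤ} {δ : ℝ} (hδ : 0 < δ) (hδ1 : δ ≤ 1)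
    (hn : δ * |(n : ℝ)| ≤ 1 / 8) :
    ‖(⨍ x in closedBall (0 : UnitAddCircle) (δ / 2), fourier n x) - 1‖ ≤ 1 / 2 := by
  set B := closedBall (0 : UnitAddCircle) (δ / 2)
  have hvol : volume.real B = δ := volume_real_closedBall_half hδ.le hδ1 0
  have hsub : (⨍ x in B, fourier n x) - 1 = δ⁻¹ • ∫ x in B, (fourier n x - 1) := by
    rw [integral_sub (integrable_continuousMap _).integrableOn (integrable_const _),
      setAverage_eq, hvol, smul_sub, setIntegral_const, hvol, smul_smul, inv_mul_cancel₀ hδ.ne',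
      one_smul]
  have hbound (x) (hx : x ∈ B) : ‖fourier n x - 1‖ ≤ 1 / 2 := by
    have hx' : ‖x‖ ≤ δ / 2 := by simpa [B] using hx
    calc ‖fourier n x - 1‖ ≤ 2 * Real.pi * |(n : ℝ)| * ‖x‖ := norm_fourier_sub_one_le n x
      _ ≤ 2 * Real.pi * |(n : ℝ)| * (δ / 2) := by gcongr
      _ = Real.pi * (δ * |(n : ℝ)|) := by ring
      _ ≤ 4 * (1 / 8) := by gcongr; exact Real.pi_le_four
      _ = 1 / 2 := by norm_num
  have h := norm_setIntegral_le_of_norm_le_const (measure_lt_top volume B) hbound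
  rw [hvol] at h
  rw [hsub, norm_smul, norm_inv, Real.norm_of_nonneg hδ.le, inv_mul_le_iff₀ hδ]
  linarith

theorem large_sieve {ι : Type*} {I : Finset ι} {θ : ι → UnitAddCircle} {δ : ℝ}
    (hδ : 0 < δ) (hδ1 : δ ≤ 1) (hsep : ∀ r ∈ I, ∀ s ∈ I, ‖θ r - θ s‖ ≤ δ → r = s)
    {X : Finset ℤ} (hX : ∀ n ∈ X, δ * |(n : ℝ)| ≤ 1 / 8) (a : ℤ → ℂ) :
    δ * ∑ r ∈ I, ‖∑ n ∈ X, a n * fourier n (θ r)‖ ^ 2 ≤ 4 * ∑ n ∈ X, ‖a n‖ ^ 2 := by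
  set g : ℤ → ℂ := fun n => ⨍ x in closedBall (0 : UnitAddCircle) (δ / 2), fourier n x
  have hg (n) (hn : n ∈ X) : 1 / 2 ≤ ‖g n‖ := by
    have h1 := norm_setAverage_fourier_sub_one_le hδ hδ1 (hX n hn)
    have h2 := norm_sub_norm_le (1 : ℂ) (g n)
    rw [norm_one, norm_sub_rev] at h2
    linarith
  let f : C(UnitAddCircle, ℂ) := ∑ n ∈ X, (a n / g n) • fourier n
  have hf (x) : f x = ∑ n ∈ X, a n / g n * fourier n x := by
    simp [f, ContinuousMap.coe_sum, Finset.sum_apply]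
  have hmean (r) : ⨍ x in closedBall (θ r) (δ / 2), f x = ∑ n ∈ X, a n * fourier n (θ r) := by
    simp only [hf, setAverage_eq]
    rw [integral_finsetSum _ fun n _ =>
      ((integrable_continuousMap (fourier n)).const_mul _).integrableOn, Finset.smul_sum]
    refine Finset.sum_congr rfl fun n hn => ?_
    have hgn : g n ≠ 0 := norm_pos_iff.1 (one_half_pos.trans_le (hg n hn))
    rw [integral_const_mul, ← mul_smul_comm, ← setAverage_eq, setAverage_fourier_closedBall,
      ← mul_assoc, div_mul_cancel₀ _ hgn]
  have hnorm (n) (hn : n ∈ X) : ‖a n / g n‖ ^ 2 ≤ 4 * ‖a n‖ ^ 2 := by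
    have hpos : 0 < ‖g n‖ := one_half_pos.trans_le (hg n hn)
    rw [norm_div, div_pow, div_le_iff₀ (pow_pos hpos 2)]
    nlinarith [mul_le_mul_of_nonneg_left (pow_le_pow_left₀ one_half_pos.le (hg n hn) 2)
      (sq_nonneg ‖a n‖)]
  calc δ * ∑ r ∈ I, ‖∑ n ∈ X, a n * fourier n (θ r)‖ ^ 2
      ≤ ∫ x, ‖f x‖ ^ 2 := by
        simpa only [hmean] using mul_sum_norm_setAverage_sq_le hδ hδ1 hsep f
    _ = ∑ n ∈ X, ‖a n / g n‖ ^ 2 := by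
        simp only [hf, integral_norm_sq_sum_fourier]
    _ ≤ 4 * ∑ n ∈ X, ‖a n‖ ^ 2 := by
        rw [Finset.mul_sum]
        exact Finset.sum_le_sum hnorm

end LargeSieve

section PrimitivePoints

/-- The points of exact order `n` on the circle `ℝ/ℤ`, that is the fractions `m/n` in lowest
terms; they carry the large-sieve information modulo `n`. -/
noncomputable def primitivePoints (n : ℕ) : Finset UnitAddCircle :=
  ((Finset.range n).filter n.Coprime).image fun m : ℕ => ((m / n : ℝ) : UnitAddCircle)

lemma mem_primitivePoints {n : ℕ} (hn : 0 < n) {x : UnitAddCircle} :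
    x ∈ primitivePoints n ↔ addOrderOf x = n := by
  simp only [primitivePoints, AddCircle.addOrderOf_eq_pos_iff hn, Finset.mem_image,
    Finset.mem_filter, Finset.mem_range, mul_one, and_assoc, Nat.coprime_comm (m := n),
    Nat.coprime_iff_gcd_eq_one]

lemma card_primitivePoints {n : ℕ} (hn : 0 < n) : (primitivePoints n).card = n.totient := by
  rw [← AddCircle.card_addOrderOf_eq_totient (1 : ℝ), ← Nat.card_eq_finsetCard]
  exact Nat.card_congr (Equiv.subtypeEquivRight fun _ => mem_primitivePoints hn)

lemma sum_primitivePoints_mul {M : Type*} [AddCommMonoid M] {m n : ℕ} (hm : 0 < m) (hn : 0 < n)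
    (hmn : m.Coprime n) (f : UnitAddCircle → M) :
    ∑ z ∈ primitivePoints (m * n), f z =
      ∑ x ∈ primitivePoints m, ∑ y ∈ primitivePoints n, f (x + y) := by
  have hinj : Set.InjOn (fun q : UnitAddCircle × UnitAddCircle => q.1 + q.2)
      (primitivePoints m ×ˢ primitivePoints n : Finset _) := by
    rintro ⟨x, y⟩ hxy ⟨x', y'⟩ hxy' h
    simp only [Finset.coe_product, Set.mem_prod, Finset.mem_coe, mem_primitivePoints hm,
      mem_primitivePoints hn] at hxy hxy' h
    have hsub : x - x' = y' - y := by rw [sub_eq_sub_iff_add_eq_add, h, add_comm]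
    have hkill_m : m • (x - x') = 0 := by
      rw [smul_sub, ← hxy.1, addOrderOf_nsmul_eq_zero, hxy.1, ← hxy'.1, addOrderOf_nsmul_eq_zero,
        sub_zero]
    have hkill_n : n • (x - x') = 0 := by
      rw [hsub, smul_sub, ← hxy.2, addOrderOf_nsmul_eq_zero, hxy.2, ← hxy'.2,
        addOrderOf_nsmul_eq_zero, sub_zero]
    have hzero : x - x' = 0 := AddMonoid.addOrderOf_eq_one_iff.1 <| Nat.eq_one_of_dvd_coprimes hmn
      (addOrderOf_dvd_of_nsmul_eq_zero hkill_m) (addOrderOf_dvd_of_nsmul_eq_zero hkill_n)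
    rw [hzero, eq_comm] at hsub
    rw [sub_eq_zero.1 hzero, sub_eq_zero.1 hsub]
  have himage : (primitivePoints m ×ˢ primitivePoints n).image (fun q => q.1 + q.2) =
      primitivePoints (m * n) := by
    refine Finset.eq_of_subset_of_card_le (Finset.image_subset_iff.2 fun q hq => ?_) ?_
    · simp only [Finset.mem_product, mem_primitivePoints hm, mem_primitivePoints hn] at hq
      rw [mem_primitivePoints (Nat.mul_pos hm hn),
        (AddCommute.all _ _).addOrderOf_add_eq_mul_addOrderOf_of_coprime (by rwa [hq.1, hq.2]),
        hq.1, hq.2]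
    · rw [Finset.card_image_of_injOn hinj, Finset.card_product, card_primitivePoints hm,
        card_primitivePoints hn, card_primitivePoints (Nat.mul_pos hm hn), Nat.totient_mul hmn]
  rw [← himage, Finset.sum_image hinj, Finset.sum_product]

lemma primitivePoints_prime (p : ℕ) [hp : Fact p.Prime] :
    primitivePoints p = (Finset.univ.erase (0 : ZMod p)).image ZMod.toAddCircle := by
  refine (Finset.eq_of_subset_of_card_le (Finset.image_subset_iff.2 fun j hj => ?_) ?_).symm
  · rw [mem_primitivePoints hp.out.pos]
    refine addOrderOf_eq_prime ?_ fun h => Finset.ne_of_mem_erase hj (ZMod.toAddCircle_eq_zero.1 h)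
    rw [← map_nsmul, nsmul_eq_mul, CharP.cast_eq_zero, zero_mul, map_zero]
  · rw [Finset.card_image_of_injective _ (ZMod.toAddCircle_injective p),
      card_primitivePoints hp.out.pos, Finset.card_erase_of_mem (Finset.mem_univ _),
      Finset.card_univ, ZMod.card, Nat.totient_prime hp.out]

end PrimitivePoints

section Montgomery

lemma sum_norm_sq_sum_mul_stdAddChar {N : ℕ} [NeZero N] (f : ZMod N → ℂ) :
    ∑ j, ‖∑ u, f u * ZMod.stdAddChar (j * u)‖ ^ 2 = N * ∑ u, ‖f u‖ ^ 2 := by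
  have hexpand (j : ZMod N) : ((‖∑ u, f u * ZMod.stdAddChar (j * u)‖ ^ 2 : ℝ) : ℂ) =
      ∑ u, ∑ v, f u * starRingEnd ℂ (f v) * ZMod.stdAddChar (j * (u - v)) := by
    rw [Complex.ofReal_pow, ← Complex.mul_conj', map_sum, Finset.sum_mul_sum]
    refine Finset.sum_congr rfl fun u _ => Finset.sum_congr rfl fun v _ => ?_
    rw [map_mul (starRingEnd ℂ), ← AddChar.map_neg_eq_conj, mul_sub, sub_eq_add_neg,
      AddChar.map_add_eq_mul]
    ring
  apply Complex.ofReal_injective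
  rw [Complex.ofReal_sum, Finset.sum_congr rfl fun j _ => hexpand j, Finset.sum_comm,
    Complex.ofReal_mul, Complex.ofReal_sum, Finset.mul_sum]
  refine Finset.sum_congr rfl fun u _ => ?_
  rw [Finset.sum_comm]
  simp_rw [← Finset.mul_sum, AddChar.sum_mulShift _ (ZMod.isPrimitive_stdAddChar N), sub_eq_zero,
    ZMod.card, Nat.cast_ite, Nat.cast_zero, mul_ite, mul_zero]
  rw [Finset.sum_ite_eq, if_pos (Finset.mem_univ u), Complex.mul_conj', Complex.ofReal_pow,
    Complex.ofReal_natCast, mul_comm]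

/-- The exponential sum `∑_{n ∈ X} e(nθ)`, the generating function of the set `X`. -/
noncomputable def expSum (X : Finset ℤ) (θ : UnitAddCircle) : ℂ :=
  ∑ n ∈ X, fourier n θ

lemma fourier_toAddCircle {N : ℕ} [NeZero N] (n : ℤ) (j : ZMod N) :
    fourier n (ZMod.toAddCircle j) = ZMod.stdAddChar (j * (n : ZMod N)) := by
  obtain ⟨m, rfl⟩ := ZMod.intCast_surjective j
  rw [← Int.cast_mul, ZMod.stdAddChar_coe, ZMod.toAddCircle_intCast, fourier_coe_apply]
  push_cast
  congr 1
  ring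

lemma fourier_add_apply (n : ℤ) (x y : UnitAddCircle) :
    fourier n (x + y) = fourier n x * fourier n y := by
  simp only [fourier_apply, smul_add, AddCircle.toCircle_add, Circle.coe_mul]

lemma sum_norm_expSum_add_sq_ge {p : ℕ} [Fact p.Prime] {X : Finset ℤ} {k : ℕ}
    (hX : (X.image (Int.cast : ℤ → ZMod p)).card + k ≤ p) (θ : UnitAddCircle) :
    p * ‖expSum X θ‖ ^ 2 ≤ (p - k) * ∑ j : ZMod p, ‖expSum X (θ + ZMod.toAddCircle j)‖ ^ 2 := by
  let A : ZMod p → ℂ := fun u => ∑ n ∈ X.filter fun n : ℤ => (n : ZMod p) = u, fourier n θ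
  have hcard : ((X.image (Int.cast : ℤ → ZMod p)).card : ℝ) ≤ p - k := by
    rw [le_sub_iff_add_le]; exact_mod_cast hX
  have hsplit (j : ZMod p) :
      expSum X (θ + ZMod.toAddCircle j) = ∑ u, A u * ZMod.stdAddChar (j * u) := by
    rw [expSum, ← Finset.sum_fiberwise X (Int.cast : ℤ → ZMod p)]
    refine Finset.sum_congr rfl fun u _ => ?_
    rw [Finset.sum_mul]
    refine Finset.sum_congr rfl fun n hn => ?_
    rw [fourier_add_apply, fourier_toAddCircle, (Finset.mem_filter.1 hn).2]
  have hsupp : expSum X θ = ∑ u ∈ X.image (Int.cast : ℤ → ZMod p), A u :=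
    (Finset.sum_fiberwise_of_maps_to (fun _ hn => Finset.mem_image_of_mem _ hn) _).symm
  have hcs : ‖expSum X θ‖ ^ 2 ≤ (p - k) * ∑ u, ‖A u‖ ^ 2 :=
    calc ‖expSum X θ‖ ^ 2 ≤ (∑ u ∈ X.image (Int.cast : ℤ → ZMod p), ‖A u‖) ^ 2 := by
          rw [hsupp]; gcongr; exact norm_sum_le _ _
      _ ≤ _ := sq_sum_le_card_mul_sum_sq
      _ ≤ (p - k) * ∑ u, ‖A u‖ ^ 2 := mul_le_mul hcard
          (Finset.sum_le_univ_sum_of_nonneg fun _ => sq_nonneg _)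
          (Finset.sum_nonneg fun _ _ => sq_nonneg _) ((Nat.cast_nonneg _).trans hcard)
  simp only [hsplit, sum_norm_sq_sum_mul_stdAddChar]
  calc p * ‖expSum X θ‖ ^ 2 ≤ p * ((p - k) * ∑ u, ‖A u‖ ^ 2) := by gcongr
    _ = (p - k) * (p * ∑ u, ‖A u‖ ^ 2) := by ring

lemma montgomery_prime {p : ℕ} [hp : Fact p.Prime] {X : Finset ℤ} {k : ℕ} (hk : k < p)
    (hX : (X.image (Int.cast : ℤ → ZMod p)).card + k ≤ p) (θ : UnitAddCircle) :
    (k : ℝ) / (p - k) * ‖expSum X θ‖ ^ 2 ≤ ∑ x ∈ primitivePoints p, ‖expSum X (θ + x)‖ ^ 2 := by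
  have hpos : (0 : ℝ) < p - k := sub_pos.2 (Nat.cast_lt.2 hk)
  have h := sum_norm_expSum_add_sq_ge hX θ
  rw [← Finset.add_sum_erase _ _ (Finset.mem_univ (0 : ZMod p)), map_zero, add_zero] at h
  rw [primitivePoints_prime, Finset.sum_image (ZMod.toAddCircle_injective p).injOn,
    div_mul_eq_mul_div, div_le_iff₀ hpos]
  linarith

theorem montgomery {X : Finset ℤ} {k : ℕ} {E : Finset ℕ} (hE : ∀ p ∈ E, p.Prime)
    (hk : ∀ p ∈ E, k < p) (hX : ∀ p ∈ E, (X.image (Int.cast : ℤ → ZMod p)).card + k ≤ p)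
    (θ : UnitAddCircle) :
    (∏ p ∈ E, (k : ℝ) / (p - k)) * ‖expSum X θ‖ ^ 2 ≤
      ∑ x ∈ primitivePoints (∏ p ∈ E, p), ‖expSum X (θ + x)‖ ^ 2 := by
  induction E using Finset.induction_on with
  | empty =>
    rw [Finset.prod_empty, Finset.prod_empty, one_mul]
    refine Finset.single_le_sum (f := fun x => ‖expSum X (θ + x)‖ ^ 2) (fun _ _ => sq_nonneg _)
      ((mem_primitivePoints one_pos).2 addOrderOf_zero) |>.trans' ?_
    rw [add_zero]
  | insert p E hpE ih =>
    rw [Finset.forall_mem_insert] at hE hk hX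
    have : Fact p.Prime := ⟨hE.1⟩
    have hcop : (∏ q ∈ E, q).Coprime p := Nat.Coprime.prod_left fun q hq =>
      (Nat.coprime_primes (hE.2 q hq) hE.1).2 (ne_of_mem_of_not_mem hq hpE)
    have hpos : (0 : ℝ) ≤ k / (p - k) :=
      div_nonneg k.cast_nonneg (sub_nonneg.2 (Nat.cast_le.2 hk.1.le))
    rw [Finset.prod_insert hpE, Finset.prod_insert hpE, mul_comm p,
      sum_primitivePoints_mul (Finset.prod_pos fun q hq => (hE.2 q hq).pos) hE.1.pos hcop]
    calc (k : ℝ) / (p - k) * (∏ q ∈ E, (k : ℝ) / (q - k)) * ‖expSum X θ‖ ^ 2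
        ≤ ∑ x ∈ primitivePoints (∏ q ∈ E, q), k / (p - k) * ‖expSum X (θ + x)‖ ^ 2 := by
          rw [mul_assoc, ← Finset.mul_sum]
          exact mul_le_mul_of_nonneg_left (ih hE.2 hk.2 hX.2) hpos
      _ ≤ _ := Finset.sum_le_sum fun x _ => by
          simpa only [add_assoc] using montgomery_prime hk.1 hX.1 (θ + x)

end Montgomery

section Separation

lemma one_le_mul_norm_sub {m n : ℕ} {u v : UnitAddCircle} (hm : 0 < m) (hn : 0 < n)
    (hu : m • u = 0) (hv : n • v = 0) (huv : u ≠ v) : 1 ≤ (m * n : ℕ) * ‖u - v‖ := by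
  have hkill : (m * n) • (u - v) = 0 := by
    rw [smul_sub, mul_smul, mul_smul, hv, smul_zero, sub_zero, smul_comm, hu, smul_zero]
  have hmn : 0 < m * n := Nat.mul_pos hm hn
  have h := AddCircle.le_add_order_smul_norm_of_isOfFinAddOrder
    (isOfFinAddOrder_iff_nsmul_eq_zero.2 ⟨_, hmn, hkill⟩) (sub_ne_zero.2 huv)
  rw [nsmul_eq_mul] at h
  refine h.trans ?_
  gcongr
  exact Nat.le_of_dvd hmn (addOrderOf_dvd_of_nsmul_eq_zero hkill)

lemma exists_prime_dvd_addOrderOf {δ : ℝ} {Q : ℕ} (hδQ : 2 * δ * Q ^ 2 < 1) (α : UnitAddCircle) :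
    ∃ r : ℕ, r.Prime ∧ ∀ u : UnitAddCircle, u ≠ 0 → 0 < addOrderOf u → addOrderOf u ≤ Q →
      ‖α + u‖ ≤ δ → r ∣ addOrderOf u := by
  by_cases hex : ∃ u : UnitAddCircle, u ≠ 0 ∧ 0 < addOrderOf u ∧ addOrderOf u ≤ Q ∧ ‖α + u‖ ≤ δ
  · obtain ⟨u, hu0, hupos, huQ, huα⟩ := hex
    refine ⟨(addOrderOf u).minFac,
      Nat.minFac_prime fun h => hu0 (AddMonoid.addOrderOf_eq_one_iff.1 h),
      fun v _ hvpos hvQ hvα => ?_⟩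
    -- At most one torsion point of small order is close to `-α`, so any prime factor will do.
    have huv : u = v := by
      by_contra hne
      have hsep := one_le_mul_norm_sub hupos hvpos (addOrderOf_nsmul_eq_zero u)
        (addOrderOf_nsmul_eq_zero v) hne
      have hclose : ‖u - v‖ ≤ δ + δ := by
        rw [← add_sub_add_left_eq_sub u v α]
        exact (norm_sub_le _ _).trans (add_le_add huα hvα)
      have hord : ((addOrderOf u * addOrderOf v : ℕ) : ℝ) ≤ Q ^ 2 := by
        rw [sq]; exact_mod_cast Nat.mul_le_mul huQ hvQ
      have hle := mul_le_mul hord hclose (norm_nonneg _) (sq_nonneg _)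
      linarith
    rw [← huv]
    exact Nat.minFac_dvd _
  · push Not at hex
    exact ⟨2, Nat.prime_two, fun u h0 hpos hQ hα => absurd hα (hex u h0 hpos hQ).not_ge⟩

lemma exists_excluded_divisors {δ : ℝ} {Q : ℕ} (hδQ : 2 * δ * Q ^ 4 < 1)
    (Θ : Finset UnitAddCircle) :
    ∃ R : Finset ℕ, R.card ≤ Θ.card ^ 2 ∧ (∀ r ∈ R, r.Prime) ∧
      ∀ α ∈ Θ, ∀ β ∈ Θ, ∀ m n : ℕ, 0 < m → m ≤ Q → 0 < n → n ≤ Q →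
        (∀ r ∈ R, ¬ r ∣ m) → (∀ r ∈ R, ¬ r ∣ n) →
          ∀ x ∈ primitivePoints m, ∀ y ∈ primitivePoints n, ‖α + x - (β + y)‖ ≤ δ → x = y := by
  choose r hprime hr using exists_prime_dvd_addOrderOf (δ := δ) (Q := Q ^ 2)
    (by push_cast; linarith)
  refine ⟨(Θ ×ˢ Θ).image fun q => r (q.1 - q.2), ?_,
    Finset.forall_mem_image.2 fun _ _ => hprime _, ?_⟩
  · rw [sq, ← Finset.card_product]
    exact Finset.card_image_le
  · intro α hα β hβ m n hm hmQ hn hnQ hRm hRn x hx y hy hclose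
    rw [mem_primitivePoints hm] at hx
    rw [mem_primitivePoints hn] at hy
    by_contra hne
    have hdvd : addOrderOf (x - y) ∣ m * n := addOrderOf_dvd_of_nsmul_eq_zero <| by
      rw [smul_sub, mul_comm, mul_smul, ← hx, addOrderOf_nsmul_eq_zero, mul_comm, mul_smul, ← hy,
        addOrderOf_nsmul_eq_zero, smul_zero, smul_zero, sub_zero]
    have hmem : r (α - β) ∈ (Θ ×ˢ Θ).image fun q => r (q.1 - q.2) :=
      Finset.mem_image_of_mem (fun q : UnitAddCircle × UnitAddCircle => r (q.1 - q.2))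
        (Finset.mk_mem_product hα hβ)
    have hmn : 0 < m * n := Nat.mul_pos hm hn
    have hdiv := hr (α - β) (x - y) (sub_ne_zero.2 hne) (Nat.pos_of_dvd_of_pos hdvd hmn)
      ((Nat.le_of_dvd hmn hdvd).trans (by rw [sq]; gcongr))
      (by rwa [← add_sub_add_comm])
    exact ((hprime _).dvd_mul.1 (hdiv.trans hdvd)).elim (hRm _ hmem) (hRn _ hmem)

/-- `∑ μ²(q) ∏_{p ∣ q} h(p)` over the squarefree `q ≤ Q` whose prime factors lie in `S`, where `q`
is encoded by the set `E` of its prime factors; for the densities `h` of a sieve problem this is the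
main term of the large sieve. -/
noncomputable def sieveSum (h : ℕ → ℝ) (S : Finset ℕ) (Q : ℕ) : ℝ :=
  ∑ E ∈ S.powerset.filter fun E => ∏ p ∈ E, p ≤ Q, ∏ p ∈ E, h p

lemma pairwiseDisjoint_primitivePoints {S : Finset ℕ} (hS : ∀ p ∈ S, p.Prime) :
    (S.powerset : Set (Finset ℕ)).PairwiseDisjoint fun E => primitivePoints (∏ p ∈ E, p) := by
  intro E hE E' hE' hne
  have hprime {G : Finset ℕ} (hG : G ∈ (S.powerset : Set (Finset ℕ))) : ∀ p ∈ G, p.Prime :=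
    fun p hp => hS p (Finset.mem_powerset.1 hG hp)
  have hpos {G : Finset ℕ} (hG : G ∈ (S.powerset : Set (Finset ℕ))) : 0 < ∏ p ∈ G, p :=
    Finset.prod_pos fun p hp => (hprime hG p hp).pos
  refine Finset.disjoint_left.2 fun x hx hx' => hne ?_
  rw [mem_primitivePoints (hpos hE)] at hx
  rw [mem_primitivePoints (hpos hE')] at hx'
  rw [← Nat.primeFactors_prod (hprime hE), ← Nat.primeFactors_prod (hprime hE'), ← hx, hx']

theorem exists_sum_norm_expSum_sq_le {X : Finset ℤ} {δ : ℝ} {Q : ℕ} {Θ : Finset UnitAddCircle}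
    (hδ : 0 < δ) (hδ1 : δ ≤ 1) (hδQ : 2 * δ * Q ^ 4 < 1) (hX : ∀ n ∈ X, δ * |(n : ℝ)| ≤ 1 / 8)
    (hΘ : ∀ α ∈ Θ, ∀ β ∈ Θ, ‖α - β‖ ≤ δ → α = β) :
    ∃ R : Finset ℕ, R.card ≤ Θ.card ^ 2 ∧ ∀ (k : ℕ) (S : Finset ℕ), Disjoint S R →
      (∀ p ∈ S, p.Prime ∧ k < p ∧ (X.image (Int.cast : ℤ → ZMod p)).card + k ≤ p) →
        δ * (sieveSum (fun p => k / (p - k)) S Q * ∑ α ∈ Θ, ‖expSum X α‖ ^ 2) ≤ 4 * X.card := by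
  obtain ⟨R, hR, hRprime, hsep⟩ := exists_excluded_divisors hδQ Θ
  refine ⟨R, hR, fun k S hdisj hS => ?_⟩
  set 𝓔 := S.powerset.filter fun E => ∏ p ∈ E, p ≤ Q
  have h𝓔 {E} (hE : E ∈ 𝓔) : E ⊆ S ∧ ∏ p ∈ E, p ≤ Q := by simpa [𝓔] using hE
  have hpos {E} (hE : E ∈ 𝓔) : 0 < ∏ p ∈ E, p :=
    Finset.prod_pos fun p hp => (hS p ((h𝓔 hE).1 hp)).1.pos
  have hcop {E} (hE : E ∈ 𝓔) : ∀ r ∈ R, ¬ r ∣ ∏ p ∈ E, p := fun r hr hdvd => by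
    obtain ⟨p, hp, hrp⟩ := (hRprime r hr).prime.exists_mem_finset_dvd hdvd
    have hpS := (h𝓔 hE).1 hp
    rw [(Nat.prime_dvd_prime_iff_eq (hRprime r hr) (hS p hpS).1).1 hrp] at hr
    exact Finset.disjoint_left.1 hdisj hpS hr
  set Y := 𝓔.biUnion fun E => primitivePoints (∏ p ∈ E, p)
  have hpoints : ∀ q ∈ Θ ×ˢ Y, ∀ q' ∈ Θ ×ˢ Y, ‖q.1 + q.2 - (q'.1 + q'.2)‖ ≤ δ → q = q' := by
    rintro ⟨α, x⟩ hq ⟨β, y⟩ hq' hclose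
    simp only [Finset.mem_product, Y, Finset.mem_biUnion] at hq hq' hclose
    obtain ⟨hα, E, hE, hx⟩ := hq
    obtain ⟨hβ, E', hE', hy⟩ := hq'
    have hxy : x = y := hsep α hα β hβ _ _ (hpos hE) (h𝓔 hE).2 (hpos hE') (h𝓔 hE').2 (hcop hE)
      (hcop hE') x hx y hy hclose
    rw [hxy, hΘ α hα β hβ (by rwa [hxy, add_sub_add_right_eq_sub] at hclose)]
  have hls := large_sieve hδ hδ1 hpoints hX 1
  simp only [Pi.one_apply, one_mul, norm_one, one_pow, Finset.sum_const, nsmul_one] at hls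
  refine hls.trans' (mul_le_mul_of_nonneg_left ?_ hδ.le)
  rw [sieveSum, Finset.sum_mul_sum, Finset.sum_comm, Finset.sum_product]
  refine Finset.sum_le_sum fun α _ => ?_
  rw [Finset.sum_biUnion ((pairwiseDisjoint_primitivePoints fun p hp => (hS p hp).1).subset
    (Finset.coe_subset.2 (Finset.filter_subset _ _)))]
  exact Finset.sum_le_sum fun E hE => montgomery (fun p hp => (hS p ((h𝓔 hE).1 hp)).1)
    (fun p hp => (hS p ((h𝓔 hE).1 hp)).2.1) (fun p hp => (hS p ((h𝓔 hE).1 hp)).2.2) α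

end Separation

section SieveSum

lemma sieveSum_mono {h h' : ℕ → ℝ} {S : Finset ℕ} (hh : ∀ p ∈ S, 0 ≤ h p)
    (hh' : ∀ p ∈ S, h p ≤ h' p) {Q Q' : ℕ} (hQ : Q ≤ Q') : sieveSum h S Q ≤ sieveSum h' S Q' := by
  have hsub {E} (hE : E ∈ S.powerset.filter fun E => ∏ p ∈ E, p ≤ Q') {p} (hp : p ∈ E) : p ∈ S :=
    Finset.mem_powerset.1 (Finset.mem_filter.1 hE).1 hp
  calc sieveSum h S Q ≤ sieveSum h S Q' :=
        Finset.sum_le_sum_of_subset_of_nonneg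
          (Finset.monotone_filter_right _ fun _ _ hE => le_trans hE hQ)
          fun E hE _ => Finset.prod_nonneg fun p hp => hh p (hsub hE hp)
    _ ≤ sieveSum h' S Q' := Finset.sum_le_sum fun E hE =>
        Finset.prod_le_prod (fun p hp => hh p (hsub hE hp)) fun p hp => hh' p (hsub hE hp)

lemma sieveSum_nonneg {h : ℕ → ℝ} {S : Finset ℕ} (hh : ∀ p ∈ S, 0 ≤ h p) (Q : ℕ) :
    0 ≤ sieveSum h S Q :=
  Finset.sum_nonneg fun _ hE => Finset.prod_nonneg fun p hp =>
    hh p (Finset.mem_powerset.1 (Finset.mem_filter.1 hE).1 hp)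

lemma sieveSum_insert (h : ℕ → ℝ) {S : Finset ℕ} {p : ℕ} (hp : p ∉ S) (hp0 : 0 < p) (Q : ℕ) :
    sieveSum h (insert p S) Q = sieveSum h S Q + h p * sieveSum h S (Q / p) := by
  have hnot {E} (hE : E ∈ S.powerset) : p ∉ E := fun h => hp (Finset.mem_powerset.1 hE h)
  simp only [sieveSum, Finset.sum_filter]
  rw [Finset.sum_powerset_insert hp, Finset.mul_sum]
  congr 1
  refine Finset.sum_congr rfl fun E hE => ?_
  simp only [Finset.prod_insert (hnot hE), mul_ite, mul_zero, Nat.le_div_iff_mul_le hp0,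
    mul_comm p]

lemma sieveSum_empty (h : ℕ → ℝ) (Q : ℕ) : sieveSum h ∅ Q = if 1 ≤ Q then 1 else 0 := by
  rw [sieveSum, Finset.powerset_empty, Finset.filter_singleton, Finset.prod_empty]
  split_ifs <;> simp

lemma sieveSum_mul_le {h₁ h₂ : ℕ → ℝ} {S : Finset ℕ} (hS : ∀ p ∈ S, 0 < p)
    (h₁0 : ∀ p ∈ S, 0 ≤ h₁ p) (h₂0 : ∀ p ∈ S, 0 ≤ h₂ p) (Q₁ Q₂ : ℕ) :
    sieveSum h₁ S Q₁ * sieveSum h₂ S Q₂ ≤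
      sieveSum (fun p => (1 + h₁ p) * (1 + h₂ p) - 1) S (Q₁ * Q₂) := by
  induction S using Finset.induction_on generalizing Q₁ Q₂ with
  | empty =>
    simp only [sieveSum_empty, Nat.one_le_iff_ne_zero, mul_ne_zero_iff]
    split_ifs <;> simp_all
  | insert p S hpS ih =>
    rw [Finset.forall_mem_insert] at hS h₁0 h₂0
    set h : ℕ → ℝ := fun p => (1 + h₁ p) * (1 + h₂ p) - 1
    have h0 : ∀ p ∈ S, 0 ≤ h p := fun q hq => by
      nlinarith [h₁0.2 q hq, h₂0.2 q hq, mul_nonneg (h₁0.2 q hq) (h₂0.2 q hq)]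
    have ih' (Q₁ Q₂ Q : ℕ) (hQ : Q₁ * Q₂ ≤ Q) :
        sieveSum h₁ S Q₁ * sieveSum h₂ S Q₂ ≤ sieveSum h S Q :=
      (ih hS.2 h₁0.2 h₂0.2 Q₁ Q₂).trans (sieveSum_mono h0 (fun _ _ => le_rfl) hQ)
    rw [sieveSum_insert _ hpS hS.1, sieveSum_insert _ hpS hS.1, sieveSum_insert _ hpS hS.1]
    have h11 := ih' Q₁ Q₂ _ le_rfl
    have hQ₁ : Q₁ / p * Q₂ ≤ Q₁ * Q₂ / p := by
      simpa only [mul_comm] using Nat.mul_div_le_mul_div_assoc Q₂ Q₁ p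
    have h21 := ih' (Q₁ / p) Q₂ _ hQ₁
    have h12 := ih' Q₁ (Q₂ / p) _ (Nat.mul_div_le_mul_div_assoc Q₁ Q₂ p)
    have h22 := ih' (Q₁ / p) (Q₂ / p) _
      ((Nat.mul_le_mul_left _ (Nat.div_le_self Q₂ p)).trans hQ₁)
    have e1 := mul_le_mul_of_nonneg_left h21 h₁0.1
    have e2 := mul_le_mul_of_nonneg_left h12 h₂0.1
    have e3 := mul_le_mul_of_nonneg_left h22 (mul_nonneg h₁0.1 h₂0.1)
    simp only [h] at *
    linarith

lemma sieveSum_pow_le {g : ℕ → ℝ} {S : Finset ℕ} (hS : ∀ p ∈ S, 0 < p)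
    (hg : ∀ p ∈ S, 0 ≤ g p) (Q k : ℕ) :
    sieveSum g S Q ^ k ≤ sieveSum (fun p => (1 + g p) ^ k - 1) S (Q ^ k) := by
  have hpow (k p) (hp : p ∈ S) : 0 ≤ (1 + g p) ^ k - 1 :=
    sub_nonneg.2 (one_le_pow₀ (le_add_of_nonneg_right (hg p hp)))
  induction k with
  | zero =>
    simpa [sieveSum] using Finset.single_le_sum (f := fun E : Finset ℕ => ∏ _ ∈ E, (0 : ℝ))
      (s := S.powerset.filter fun E => ∏ p ∈ E, p ≤ 1) (a := ∅)
      (fun _ _ => Finset.prod_nonneg fun _ _ => le_rfl) (by simp)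
  | succ k ih =>
    calc sieveSum g S Q ^ (k + 1)
        ≤ sieveSum (fun p => (1 + g p) ^ k - 1) S (Q ^ k) * sieveSum g S Q := by
          rw [pow_succ]
          exact mul_le_mul_of_nonneg_right ih (sieveSum_nonneg hg Q)
      _ ≤ _ := sieveSum_mul_le hS (hpow k) hg _ _
      _ = sieveSum (fun p => (1 + g p) ^ (k + 1) - 1) S (Q ^ (k + 1)) := by
          simp only [add_sub_cancel, pow_succ]

lemma one_add_inv_pow_sub_one_le {k p : ℕ} (hkp : k < p) :
    (1 + 1 / (p - 1 : ℝ)) ^ k - 1 ≤ k / (p - k) := by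
  obtain rfl | hk := k.eq_zero_or_pos
  · simp
  have hp1 : (1 : ℝ) < p := by exact_mod_cast Nat.lt_of_le_of_lt hk hkp
  have hkp' : (k : ℝ) < p := by exact_mod_cast hkp
  have hbernoulli : 1 - (k / p : ℝ) ≤ (1 - 1 / p) ^ k := by
    have h := one_add_mul_le_pow (a := -(1 / p : ℝ))
      (by linarith [(div_le_one (by linarith)).2 hp1.le]) k
    rwa [mul_neg, mul_one_div, ← sub_eq_add_neg, ← sub_eq_add_neg] at h
  calc (1 + 1 / (p - 1 : ℝ)) ^ k - 1 = ((1 - 1 / (p : ℝ)) ^ k)⁻¹ - 1 := by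
        rw [← inv_pow]
        congr 2
        have : (p : ℝ) - 1 ≠ 0 := by linarith
        field_simp
        ring
    _ ≤ (1 - k / p : ℝ)⁻¹ - 1 := by
        gcongr
        rwa [sub_pos, div_lt_one (by linarith)]
    _ = k / (p - k) := by
        have : (p : ℝ) - k ≠ 0 := by linarith
        field_simp
        ring

lemma sieveSum_pow_le_sieveSum_div {S : Finset ℕ} {k : ℕ} (hS : ∀ p ∈ S, 1 < p ∧ k < p) (Q : ℕ) :
    sieveSum (fun p => 1 / (p - 1)) S Q ^ k ≤ sieveSum (fun p => k / (p - k)) S (Q ^ k) := by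
  have h0 : ∀ p ∈ S, (0 : ℝ) ≤ 1 / (p - 1) := fun p hp =>
    one_div_nonneg.2 (sub_nonneg.2 (by exact_mod_cast (hS p hp).1.le))
  exact (sieveSum_pow_le (fun p hp => (hS p hp).1.pos) h0 Q k).trans <|
    sieveSum_mono (fun p hp => sub_nonneg.2 (one_le_pow₀ (le_add_of_nonneg_right (h0 p hp))))
      (fun p hp => one_add_inv_pow_sub_one_le (hS p hp).2) le_rfl

lemma sieveSum_union_le {h : ℕ → ℝ} {R S : Finset ℕ} (hR : ∀ p ∈ R, 0 < p)
    (hhR : ∀ p ∈ R, 0 ≤ h p) (hhS : ∀ p ∈ S, 0 ≤ h p) (Q : ℕ) :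
    sieveSum h (R ∪ S) Q ≤ (∏ p ∈ R, (1 + h p)) * sieveSum h S Q := by
  induction R using Finset.induction_on with
  | empty => simp
  | insert p R hpR ih =>
    rw [Finset.forall_mem_insert] at hR hhR
    specialize ih hR.2 hhR.2
    have h0 : ∀ q ∈ R ∪ S, 0 ≤ h q := fun q hq =>
      (Finset.mem_union.1 hq).elim (hhR.2 q) (hhS q)
    have hstep : sieveSum h (insert p (R ∪ S)) Q ≤ (1 + h p) * sieveSum h (R ∪ S) Q := by
      by_cases hp : p ∈ R ∪ S
      · rw [Finset.insert_eq_of_mem hp]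
        exact le_mul_of_one_le_left (sieveSum_nonneg h0 Q) (le_add_of_nonneg_right hhR.1)
      · rw [sieveSum_insert h hp hR.1, one_add_mul]
        have := sieveSum_mono h0 (fun _ _ => le_rfl) (Nat.div_le_self Q p)
        exact add_le_add_right (mul_le_mul_of_nonneg_left this hhR.1) _
    rw [Finset.insert_union, Finset.prod_insert hpR, mul_assoc]
    exact hstep.trans (mul_le_mul_of_nonneg_left ih (add_nonneg zero_le_one hhR.1))

lemma one_add_one_div_sub_one {x : ℝ} (hx : 1 < x) : 1 + 1 / (x - 1) = (1 - x⁻¹)⁻¹ := by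
  have : x - 1 ≠ 0 := by linarith
  field_simp
  ring

lemma hasSum_inv_factoredNumbers {E : Finset ℕ} (hE : ∀ p ∈ E, p.Prime) :
    HasSum (fun m : Nat.factoredNumbers E => ((m : ℕ) : ℝ)⁻¹) (∏ p ∈ E, (1 - (p : ℝ)⁻¹)⁻¹) := by
  have h := (EulerProduct.summable_and_hasSum_factoredNumbers_prod_filter_prime_geometric
    (f := (invMonoidWithZeroHom : ℝ →*₀ ℝ).toMonoidHom.comp (Nat.castRingHom ℝ).toMonoidHom)
    (fun {p} hp => by
      change ‖(p : ℝ)⁻¹‖ < 1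
      simpa using inv_lt_one_of_one_lt₀ (Nat.one_lt_cast (α := ℝ).2 hp.one_lt)) E).2
  rw [Finset.filter_true_of_mem hE] at h
  exact h

lemma sum_inv_le_of_primeFactors_eq {E s : Finset ℕ} (hE : ∀ p ∈ E, p.Prime)
    (hs : ∀ n ∈ s, n ≠ 0 ∧ n.primeFactors = E) :
    ∑ n ∈ s, (n : ℝ)⁻¹ ≤ ∏ p ∈ E, 1 / (p - 1 : ℝ) := by
  set D := ∏ p ∈ E, p
  have hD : D ≠ 0 := Finset.prod_ne_zero_iff.2 fun p hp => (hE p hp).ne_zero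
  have hmul {n} (hn : n ∈ s) : D * (n / D) = n :=
    Nat.mul_div_cancel' ((hs n hn).2 ▸ n.prod_primeFactors_dvd : ∏ p ∈ E, p ∣ n)
  have hmem {n} (hn : n ∈ s) : n / D ∈ Nat.factoredNumbers E := by
    rw [Nat.mem_factoredNumbers_iff_primeFactors_subset, ← (hs n hn).2]
    have hne : n / D ≠ 0 := right_ne_zero_of_mul (hmul hn ▸ (hs n hn).1)
    exact ⟨hne, Nat.primeFactors_mono (Dvd.intro_left D (hmul hn)) (hs n hn).1⟩
  have hinj : Set.InjOn (· / D) (s : Set ℕ) := fun m hm n hn h => by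
    rw [← hmul hm, ← hmul hn, show m / D = n / D from h]
  have hle := sum_le_hasSum (s.image (· / D))
    (fun n _ => Set.indicator_nonneg (fun n _ => by simp) n)
    (hasSum_subtype_iff_indicator (f := fun n : ℕ => (n : ℝ)⁻¹).1 (hasSum_inv_factoredNumbers hE))
  rw [Finset.sum_image hinj] at hle
  calc ∑ n ∈ s, (n : ℝ)⁻¹ = (D : ℝ)⁻¹ * ∑ n ∈ s, ((n / D : ℕ) : ℝ)⁻¹ := by
        rw [Finset.mul_sum]
        exact Finset.sum_congr rfl fun n hn => by rw [← mul_inv, ← Nat.cast_mul, hmul hn]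
    _ ≤ (D : ℝ)⁻¹ * ∏ p ∈ E, (1 - (p : ℝ)⁻¹)⁻¹ := by
        refine mul_le_mul_of_nonneg_left (hle.trans' (Finset.sum_le_sum fun n hn => ?_))
          (by positivity)
        simp [Set.indicator_of_mem (hmem hn)]
    _ = ∏ p ∈ E, 1 / (p - 1 : ℝ) := by
        rw [Nat.cast_prod, ← Finset.prod_inv_distrib, ← Finset.prod_mul_distrib]
        refine Finset.prod_congr rfl fun p hp => ?_
        have h1 : (1 : ℝ) < p := Nat.one_lt_cast.2 (hE p hp).one_lt
        rw [← mul_inv, mul_sub, mul_one, mul_inv_cancel₀ (by linarith), one_div]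

lemma log_le_sieveSum_primesLE (y : ℕ) :
    Real.log y ≤ sieveSum (fun p => 1 / (p - 1)) (Nat.primesLE y) y := by
  have hmaps : ∀ n ∈ Finset.Icc 1 y, n.primeFactors ∈
      (Nat.primesLE y).powerset.filter fun E => ∏ p ∈ E, p ≤ y := fun n hn => by
    obtain ⟨hn1, hny⟩ := Finset.mem_Icc.1 hn
    have hle {d} (hd : d ∣ n) : d ≤ y := (Nat.le_of_dvd hn1 hd).trans hny
    refine Finset.mem_filter.2 ⟨Finset.mem_powerset.2 fun p hp => Nat.mem_primesLE.2 ?_,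
      hle n.prod_primeFactors_dvd⟩
    exact ⟨hle (Nat.dvd_of_mem_primeFactors hp), Nat.prime_of_mem_primeFactors hp⟩
  calc Real.log y ≤ harmonic y := by simpa using log_le_harmonic_floor y y.cast_nonneg
    _ = ∑ n ∈ Finset.Icc 1 y, (n : ℝ)⁻¹ := by simp [harmonic_eq_sum_Icc]
    _ ≤ sieveSum (fun p => 1 / (p - 1)) (Nat.primesLE y) y := by
        rw [← Finset.sum_fiberwise_of_maps_to hmaps]
        refine Finset.sum_le_sum fun E hE => sum_inv_le_of_primeFactors_eq (fun p hp => ?_)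
          fun n hn => ?_
        · exact (Nat.mem_primesLE.1 (Finset.mem_powerset.1 (Finset.mem_filter.1 hE).1 hp)).2
        · rw [Finset.mem_filter, Finset.mem_Icc] at hn
          exact ⟨(zero_lt_one.trans_le hn.1.1).ne', hn.2⟩

end SieveSum

section Mertens

open Real

lemma sum_log_le_log {n : ℕ} {S : Finset ℕ} (hn : n ≠ 0) (hS : ∀ p ∈ S, p.Prime ∧ p ∣ n) :
    ∑ p ∈ S, log p ≤ log n := by
  have hdvd : ∏ p ∈ S, p ∣ n :=
    Finset.prod_primes_dvd n (fun p hp => (hS p hp).1.prime) fun p hp => (hS p hp).2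
  rw [← log_prod fun p hp => Nat.cast_ne_zero.2 (hS p hp).1.ne_zero, ← Nat.cast_prod]
  exact log_le_log (Nat.cast_pos.2 (Nat.pos_of_dvd_of_pos hdvd (Nat.pos_of_ne_zero hn)))
    (Nat.cast_le.2 (Nat.le_of_dvd (Nat.pos_of_ne_zero hn) hdvd))

lemma sum_div_mul_log_primesLE_le (n : ℕ) :
    ∑ p ∈ Nat.primesLE n, ((n / p : ℕ) : ℝ) * log p ≤ n * log n := by
  calc ∑ p ∈ Nat.primesLE n, ((n / p : ℕ) : ℝ) * log p
      = ∑ e ∈ Finset.range n, ∑ p ∈ (Nat.primesLE n).filter (· ∣ e + 1), log p := by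
        simp_rw [Finset.sum_filter]
        rw [Finset.sum_comm]
        simp_rw [← Finset.sum_filter, Finset.sum_const, Nat.card_multiples, nsmul_eq_mul]
    _ ≤ ∑ e ∈ Finset.range n, log (e + 1 : ℕ) := Finset.sum_le_sum fun e _ =>
        sum_log_le_log e.succ_ne_zero fun p hp =>
          ⟨(Nat.mem_primesLE.1 (Finset.mem_filter.1 hp).1).2, (Finset.mem_filter.1 hp).2⟩
    _ ≤ ∑ _ ∈ Finset.range n, log n := Finset.sum_le_sum fun e he =>
        log_le_log (Nat.cast_pos.2 e.succ_pos) (Nat.cast_le.2 (Finset.mem_range.1 he))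
    _ = n * log n := by simp

lemma sum_log_div_primesLE_le (n : ℕ) :
    ∑ p ∈ Nat.primesLE n, log p / p ≤ log n + log 4 := by
  obtain rfl | hn := n.eq_zero_or_pos
  · simpa using log_nonneg (by norm_num)
  have htheta : ∑ p ∈ Nat.primesLE n, log p ≤ log 4 * n := by
    rw [← Chebyshev.theta_eq_sum_primesLE_log]
    exact Chebyshev.theta_le_log4_mul_x n.cast_nonneg
  have hdiv (p : ℕ) : (n : ℝ) * (log p / p) ≤ (n / p : ℕ) * log p + log p := by
    rw [mul_div_left_comm, mul_comm (log _), ← add_one_mul]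
    refine mul_le_mul_of_nonneg_right ?_ (log_natCast_nonneg p)
    simpa [Nat.floor_div_eq_div] using (Nat.lt_floor_add_one (n / p : ℝ)).le
  refine le_of_mul_le_mul_left ?_ (Nat.cast_pos.2 hn : (0 : ℝ) < n)
  calc (n : ℝ) * ∑ p ∈ Nat.primesLE n, log p / p
      ≤ ∑ p ∈ Nat.primesLE n, (n / p : ℕ) * log p + ∑ p ∈ Nat.primesLE n, log p := by
        rw [Finset.mul_sum, ← Finset.sum_add_distrib]
        exact Finset.sum_le_sum fun p _ => hdiv p
    _ ≤ n * (log n + log 4) := by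
        linarith [sum_div_mul_log_primesLE_le n]

lemma tsum_one_div_add_one_rpow_le {s : ℝ} (hs : 1 < s) :
    ∑' n : ℕ, 1 / ((n : ℝ) + 1) ^ s ≤ 1 + 1 / (s - 1) := by
  have hterm : 0 ≤ ZetaAsymptotics.termTSum s :=
    tsum_nonneg fun n => ZetaAsymptotics.term_nonneg (n + 1) s
  nlinarith [ZetaAsymptotics.zeta_limit_aux1 hs]

lemma prod_inv_one_sub_rpow_primesLE_le {s : ℝ} (hs : 1 < s) (z : ℕ) :
    ∏ p ∈ Nat.primesLE z, (1 - ((p : ℝ) ^ s)⁻¹)⁻¹ ≤ 1 + 1 / (s - 1) := by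
  set f : ℕ →* ℝ :=
    { toFun := fun n => ((n : ℝ) ^ s)⁻¹
      map_one' := by simp
      map_mul' := fun m n => by
        rw [Nat.cast_mul, mul_rpow m.cast_nonneg n.cast_nonneg, mul_inv] }
  have hf0 (n : ℕ) : 0 ≤ f n := inv_nonneg.2 (rpow_nonneg n.cast_nonneg s)
  have hsum : Summable f := summable_nat_rpow_inv.2 hs
  calc ∏ p ∈ Nat.primesLE z, (1 - ((p : ℝ) ^ s)⁻¹)⁻¹
      = ∑' m : Nat.smoothNumbers (z + 1), f m :=
        EulerProduct.prod_primesBelow_geometric_eq_tsum_smoothNumbers hsum (z + 1)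
    _ ≤ ∑' n, f n := hsum.tsum_subtype_le f _ hf0
    _ = ∑' n : ℕ, 1 / ((n : ℝ) + 1) ^ s := by
        rw [hsum.tsum_eq_zero_add]
        simp [f, zero_rpow (by linarith : s ≠ 0)]
    _ ≤ 1 + 1 / (s - 1) := tsum_one_div_add_one_rpow_le hs

lemma inv_one_sub_inv_le_mul_exp {p ε : ℝ} (hp : 2 ≤ p) (hε : 0 < ε) :
    (1 - p⁻¹)⁻¹ ≤ (1 - (p ^ (1 + ε))⁻¹)⁻¹ * exp (2 * ε * (log p / p)) := by
  have hp0 : 0 < p := by linarith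
  have hinv : p⁻¹ ≤ 1 / 2 := by rw [one_div]; exact inv_anti₀ two_pos hp
  have hinv0 : 0 < p⁻¹ := inv_pos.2 hp0
  have hlog : 0 ≤ log p := log_nonneg (by linarith)
  have hle : 1 - ε * log p ≤ p ^ (-ε) := by
    rw [rpow_def_of_pos hp0]
    linarith [add_one_le_exp (log p * -ε)]
  have hle1 : p ^ (-ε) ≤ 1 := rpow_le_one_of_one_le_of_nonpos (by linarith) (by linarith)
  have hlhs : 0 < 1 - p⁻¹ * p ^ (-ε) := by nlinarith
  have hexp : 1 + 2 * ε * (p⁻¹ * log p) ≤ exp (2 * ε * (p⁻¹ * log p)) := by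
    linarith [add_one_le_exp (2 * ε * (p⁻¹ * log p))]
  rw [rpow_add hp0, rpow_one, mul_inv, ← rpow_neg hp0.le, div_eq_inv_mul, ← div_eq_inv_mul,
    inv_eq_one_div, div_le_div_iff₀ (by linarith) hlhs, one_mul, mul_comm (exp _)]
  calc 1 - p⁻¹ * p ^ (-ε) ≤ (1 - p⁻¹) * (1 + 2 * ε * (p⁻¹ * log p)) := by
        have h : p⁻¹ * (1 - p ^ (-ε)) ≤ p⁻¹ * (ε * log p) :=
          mul_le_mul_of_nonneg_left (by linarith) hinv0.le
        have : 0 ≤ p⁻¹ * (ε * log p) := by positivity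
        nlinarith
    _ ≤ (1 - p⁻¹) * exp (2 * ε * (p⁻¹ * log p)) :=
        mul_le_mul_of_nonneg_left hexp (by linarith)

lemma prod_inv_one_sub_inv_primesLE_le {z : ℕ} (hz : 2 ≤ z) :
    ∏ p ∈ Nat.primesLE z, (1 - (p : ℝ)⁻¹)⁻¹ ≤ 3 * exp 6 * log z := by
  have hlog2 : log 2 ≤ log z := log_le_log two_pos (by exact_mod_cast hz)
  have hlog2' : 0.69 < log 2 := by linarith [log_two_gt_d9]
  have hlogz : 0 < log z := by linarith
  have hlog4 : log 4 = 2 * log 2 := by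
    rw [show (4 : ℝ) = 2 ^ 2 by norm_num, log_pow, Nat.cast_two]
  set ε := 1 / log z
  have hε : 0 < ε := by positivity
  have htwo {p : ℕ} (hp : p ∈ Nat.primesLE z) : (2 : ℝ) ≤ p := by
    exact_mod_cast (Nat.mem_primesLE.1 hp).2.two_le
  calc ∏ p ∈ Nat.primesLE z, (1 - (p : ℝ)⁻¹)⁻¹
      ≤ ∏ p ∈ Nat.primesLE z,
          ((1 - ((p : ℝ) ^ (1 + ε))⁻¹)⁻¹ * exp (2 * ε * (log p / p))) :=
        Finset.prod_le_prod
          (fun p hp => inv_nonneg.2 (sub_nonneg.2 (inv_le_one_of_one_le₀ (by linarith [htwo hp]))))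
          fun p hp => inv_one_sub_inv_le_mul_exp (htwo hp) hε
    _ = (∏ p ∈ Nat.primesLE z, (1 - ((p : ℝ) ^ (1 + ε))⁻¹)⁻¹) *
          exp (2 * ε * ∑ p ∈ Nat.primesLE z, log p / p) := by
        rw [Finset.prod_mul_distrib, ← exp_sum, Finset.mul_sum]
    _ ≤ (3 * log z) * exp 6 := by
        gcongr
        · refine (prod_inv_one_sub_rpow_primesLE_le (by linarith) z).trans ?_
          rw [add_sub_cancel_left, one_div_one_div]
          linarith
        · calc 2 * ε * ∑ p ∈ Nat.primesLE z, log p / p ≤ 2 * ε * (3 * log z) := by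
                gcongr
                linarith [sum_log_div_primesLE_le z]
            _ = 6 := by simp only [ε]; field_simp; norm_num
    _ = 3 * exp 6 * log z := by ring

lemma prod_inv_one_sub_inv_le_exp {R : Finset ℕ} {z : ℕ} (hz : 2 ≤ z) (hR : R.card ≤ z)
    (hRz : ∀ p ∈ R, z < p) : ∏ p ∈ R, (1 - (p : ℝ)⁻¹)⁻¹ ≤ exp 2 := by
  have hz0 : (0 : ℝ) < z := by positivity
  have hlt {p} (hp : p ∈ R) : (2 : ℝ) ≤ p ∧ (z : ℝ) ≤ p := by
    have := hRz p hp
    exact ⟨by exact_mod_cast hz.trans this.le, by exact_mod_cast this.le⟩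
  have hinv {p} (hp : p ∈ R) : (p : ℝ)⁻¹ ≤ 1 / 2 := by
    rw [one_div]; exact inv_anti₀ two_pos (hlt hp).1
  have hfactor : ∀ p ∈ R, (1 - (p : ℝ)⁻¹)⁻¹ ≤ exp (2 / z) := fun p hp => by
    calc (1 - (p : ℝ)⁻¹)⁻¹ ≤ 1 + 2 * (p : ℝ)⁻¹ := by
          have : (0 : ℝ) ≤ (p : ℝ)⁻¹ := by positivity
          rw [inv_le_iff_one_le_mul₀ (by linarith [hinv hp])]
          nlinarith [hinv hp]
      _ ≤ 1 + 2 / z := by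
          rw [div_eq_mul_inv]
          linarith [inv_anti₀ hz0 (hlt hp).2]
      _ ≤ exp (2 / z) := by linarith [add_one_le_exp (2 / z : ℝ)]
  calc ∏ p ∈ R, (1 - (p : ℝ)⁻¹)⁻¹ ≤ ∏ _p ∈ R, exp (2 / z) :=
        Finset.prod_le_prod (fun p hp => inv_nonneg.2 (by linarith [hinv hp])) hfactor
    _ = exp (R.card * (2 / z)) := by rw [Finset.prod_const, exp_nat_mul]
    _ ≤ exp (z * (2 / z)) := by gcongr
    _ = exp 2 := by rw [mul_div_cancel₀ _ hz0.ne']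

lemma prod_one_add_one_div_sub_one_le {Z R : Finset ℕ} {z : ℕ} (hz : 2 ≤ z)
    (hZ : Z ⊆ Nat.primesLE z) (hR : R.card ≤ z) (hRz : ∀ p ∈ R, z < p) :
    ∏ p ∈ Z ∪ R, (1 + 1 / (p - 1 : ℝ)) ≤ 3 * exp 8 * log z := by
  have hdisj : Disjoint Z R := Finset.disjoint_left.2 fun p hpZ hpR =>
    ((Nat.mem_primesLE.1 (hZ hpZ)).1.trans_lt (hRz p hpR)).false
  have hone {p : ℕ} (hp : p ∈ Nat.primesLE z ∨ p ∈ R) : (1 : ℝ) < p :=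
    Nat.one_lt_cast.2 (hp.elim (fun hp => (Nat.mem_primesLE.1 hp).2.one_lt)
      fun hp => by linarith [hRz p hp])
  have hfactor {p : ℕ} (hp : p ∈ Nat.primesLE z ∨ p ∈ R) : 1 ≤ (1 - (p : ℝ)⁻¹)⁻¹ := by
    rw [← one_add_one_div_sub_one (hone hp)]
    exact le_add_of_nonneg_right (one_div_nonneg.2 (sub_nonneg.2 (hone hp).le))
  calc ∏ p ∈ Z ∪ R, (1 + 1 / (p - 1 : ℝ))
      = (∏ p ∈ Z, (1 - (p : ℝ)⁻¹)⁻¹) * ∏ p ∈ R, (1 - (p : ℝ)⁻¹)⁻¹ := by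
        rw [← Finset.prod_union hdisj]
        exact Finset.prod_congr rfl fun p hp => one_add_one_div_sub_one
          (hone ((Finset.mem_union.1 hp).imp_left (@hZ p)))
    _ ≤ (∏ p ∈ Nat.primesLE z, (1 - (p : ℝ)⁻¹)⁻¹) * ∏ p ∈ R, (1 - (p : ℝ)⁻¹)⁻¹ :=
        mul_le_mul_of_nonneg_right
          (Finset.prod_le_prod_of_subset_of_one_le hZ
            (fun p hp => zero_le_one.trans (hfactor (.inl (hZ hp))))
            fun p hp _ => hfactor (.inl hp))
          (Finset.prod_nonneg fun p hp => zero_le_one.trans (hfactor (.inr hp)))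
    _ ≤ 3 * exp 6 * log z * exp 2 := by
        gcongr
        · exact Finset.prod_nonneg fun p hp => zero_le_one.trans (hfactor (.inr hp))
        · exact prod_inv_one_sub_inv_primesLE_le hz
        · exact prod_inv_one_sub_inv_le_exp hz hR hRz
    _ = 3 * exp 8 * log z := by rw [show (8 : ℝ) = 6 + 2 by norm_num, exp_add]; ring

lemma log_le_mul_sieveSum {z : ℕ} (hz : 2 ≤ z) {R : Finset ℕ} (hR : R.card ≤ z) (y : ℕ) :
    log y ≤ 3 * exp 8 * log z *
      sieveSum (fun p => 1 / (p - 1)) ((Nat.primesLE y).filter (z < ·) \ R) y := by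
  set T := (Nat.primesLE y).filter (z < ·)
  set Z := (Nat.primesLE y).filter fun p => ¬ z < p
  set h : ℕ → ℝ := fun p => 1 / (p - 1)
  have hT : ∀ p ∈ T, p.Prime ∧ z < p := fun p hp =>
    ⟨(Nat.mem_primesLE.1 (Finset.mem_filter.1 hp).1).2, (Finset.mem_filter.1 hp).2⟩
  have hZ : Z ⊆ Nat.primesLE z := fun p hp => by
    simp only [Z, Finset.mem_filter, Nat.mem_primesLE, not_lt] at hp ⊢
    exact ⟨hp.2, hp.1.2⟩
  have hunion : Nat.primesLE y = Z ∪ T ∩ R ∪ T \ R := by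
    rw [Finset.union_assoc, Finset.union_comm (T ∩ R), Finset.sdiff_union_inter, Finset.union_comm,
      Finset.filter_union_filter_not_eq]
  have hprime {p : ℕ} (hp : p ∈ Nat.primesLE y) : p.Prime := (Nat.mem_primesLE.1 hp).2
  have h0 {p : ℕ} (hp : p.Prime) : 0 ≤ h p :=
    one_div_nonneg.2 (sub_nonneg.2 (Nat.one_le_cast.2 hp.one_le))
  have hsplit {p : ℕ} (hp : p ∈ Z ∪ T ∩ R) : p.Prime :=
    hprime (hunion ▸ Finset.mem_union_left _ hp)
  have hTR : ∀ p ∈ T \ R, 0 ≤ h p := fun p hp => h0 (hT p (Finset.mem_sdiff.1 hp).1).1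
  calc log y ≤ sieveSum h (Z ∪ T ∩ R ∪ T \ R) y := hunion ▸ log_le_sieveSum_primesLE y
    _ ≤ (∏ p ∈ Z ∪ T ∩ R, (1 + h p)) * sieveSum h (T \ R) y :=
        sieveSum_union_le (fun p hp => (hsplit hp).pos) (fun p hp => h0 (hsplit hp)) hTR y
    _ ≤ 3 * exp 8 * log z * sieveSum h (T \ R) y :=
        mul_le_mul_of_nonneg_right
          (prod_one_add_one_div_sub_one_le hz hZ
            ((Finset.card_le_card Finset.inter_subset_right).trans hR)
            fun p hp => (hT p (Finset.mem_inter.1 hp).1).2)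
          (sieveSum_nonneg hTR y)

lemma log_div_pow_le_sieveSum {k z : ℕ} (hz : 2 ≤ z) (hkz : k ≤ z) {R : Finset ℕ}
    (hR : R.card ≤ z) (y : ℕ) :
    (log y / (3 * exp 8 * log z)) ^ k ≤
      sieveSum (fun p => k / (p - k)) ((Nat.primesLE y).filter (z < ·) \ R) (y ^ k) := by
  have hlogz : 0 < log z := log_pos (by exact_mod_cast hz)
  refine (pow_le_pow_left₀ (div_nonneg (log_natCast_nonneg y) (by positivity)) ?_ k).trans
    (sieveSum_pow_le_sieveSum_div (fun p hp => ?_) y)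
  · exact (div_le_iff₀' (by positivity)).2 (log_le_mul_sieveSum hz hR y)
  · have := (Finset.mem_filter.1 (Finset.mem_sdiff.1 hp).1).2
    omega

end Mertens

section Moment

open Real

lemma le_of_sum_sq_le {ι : Type*} {v : ι → ℝ} {T : Finset ι} {K α q : ℝ} (hK : 0 ≤ K) (hq : 0 ≤ q)
    (hT : ∑ t ∈ T, v t ^ 2 ≤ K * (T.card : ℝ) ^ α) {i : ι} (hi : i ∈ T) (hvi : 0 ≤ v i)
    (hmin : ∀ j ∈ T, v i ≤ v j) :
    v i ^ q ≤ K ^ (q / 2) * (1 / (T.card : ℝ) ^ ((1 - α) * (q / 2))) := by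
  have hcard : (0 : ℝ) < T.card := Nat.cast_pos.2 (Finset.card_pos.2 ⟨i, hi⟩)
  have hsq : v i ^ 2 ≤ K * (T.card : ℝ) ^ (α - 1) := by
    rw [rpow_sub_one hcard.ne', ← mul_div_assoc, le_div_iff₀' hcard, ← nsmul_eq_mul]
    exact (Finset.card_nsmul_le_sum T _ _ fun j hj =>
      pow_le_pow_left₀ hvi (hmin j hj) 2).trans hT
  calc v i ^ q = (v i ^ 2) ^ (q / 2) := by
        rw [← rpow_natCast, ← rpow_mul hvi, Nat.cast_two, mul_div_cancel₀ q two_ne_zero]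
    _ ≤ (K * (T.card : ℝ) ^ (α - 1)) ^ (q / 2) :=
        rpow_le_rpow (sq_nonneg _) hsq (by positivity)
    _ = K ^ (q / 2) * (1 / (T.card : ℝ) ^ ((1 - α) * (q / 2))) := by
        rw [mul_rpow hK (by positivity), ← rpow_mul hcard.le, one_div, ← rpow_neg hcard.le]
        ring_nf

lemma sum_rpow_le_mul_sum_range {ι : Type*} {v : ι → ℝ} (hv : ∀ i, 0 ≤ v i)
    {K α q : ℝ} (hK : 0 ≤ K) (hq : 0 ≤ q) (n : ℕ) {T : Finset ι} (hn : T.card = n)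
    (hT : ∀ T' ⊆ T, T'.Nonempty → ∑ t ∈ T', v t ^ 2 ≤ K * (T'.card : ℝ) ^ α) :
    ∑ t ∈ T, v t ^ q ≤
      K ^ (q / 2) * ∑ j ∈ Finset.range n, 1 / ((j : ℝ) + 1) ^ ((1 - α) * (q / 2)) := by
  classical
  induction n generalizing T with
  | zero => simp [Finset.card_eq_zero.1 hn]
  | succ n ih =>
    have hne : T.Nonempty := Finset.card_pos.1 (hn ▸ n.succ_pos)
    obtain ⟨i, hi, hmin⟩ := Finset.exists_min_image T v hne
    have hmin' := le_of_sum_sq_le hK hq (hT T subset_rfl hne) hi (hv i) hmin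
    rw [hn, Nat.cast_succ] at hmin'
    have herase := ih (T := T.erase i) (by rw [Finset.card_erase_of_mem hi, hn, Nat.succ_sub_one])
      fun T' hT' => hT T' (hT'.trans (Finset.erase_subset i T))
    rw [← Finset.sum_erase_add T _ hi, Finset.sum_range_succ, mul_add]
    exact add_le_add herase hmin'

theorem sum_rpow_le_of_sum_sq_le {ι : Type*} {v : ι → ℝ} (hv : ∀ i, 0 ≤ v i)
    {K α q : ℝ} (hK : 0 ≤ K) (hq : 0 ≤ q) (hαq : 1 < (1 - α) * (q / 2)) {T : Finset ι}
    (hT : ∀ T' ⊆ T, T'.Nonempty → ∑ t ∈ T', v t ^ 2 ≤ K * (T'.card : ℝ) ^ α) :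
    ∑ t ∈ T, v t ^ q ≤ (1 + 1 / ((1 - α) * (q / 2) - 1)) * K ^ (q / 2) := by
  have hsummable : Summable fun j : ℕ => 1 / ((j : ℝ) + 1) ^ ((1 - α) * (q / 2)) := by
    simpa using (summable_nat_add_iff 1).2 (summable_one_div_nat_rpow.2 hαq)
  rw [mul_comm]
  refine (sum_rpow_le_mul_sum_range hv hK hq _ rfl hT).trans
    (mul_le_mul_of_nonneg_left ?_ (rpow_nonneg hK _))
  exact (hsummable.sum_le_tsum _ fun j _ => by positivity).trans
    (tsum_one_div_add_one_rpow_le hαq)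

end Moment

section LargeValues

open Real

lemma one_add_mul_log_pow_le {k : ℕ} (hk : 1 ≤ k) {m : ℕ} (hm : 1 ≤ m) :
    (1 + 3 * log m) ^ k ≤ (31 * k : ℝ) ^ k * (m : ℝ) ^ (1 / 10 : ℝ) := by
  have hk' : (1 : ℝ) ≤ k := Nat.one_le_cast.2 hk
  have hlog : log m ≤ 10 * k * (m : ℝ) ^ (1 / (10 * k) : ℝ) := by
    have := log_le_rpow_div m.cast_nonneg (ε := 1 / (10 * k : ℝ)) (by positivity)
    rwa [div_div_eq_mul_div, div_one, mul_comm] at this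
  have hone : (1 : ℝ) ≤ (m : ℝ) ^ (1 / (10 * k) : ℝ) :=
    one_le_rpow (Nat.one_le_cast.2 hm) (by positivity)
  calc (1 + 3 * log m) ^ k ≤ (31 * k * (m : ℝ) ^ (1 / (10 * k) : ℝ)) ^ k := by
        refine pow_le_pow_left₀ (by linarith [log_natCast_nonneg m]) ?_ k
        nlinarith
    _ = (31 * k : ℝ) ^ k * (m : ℝ) ^ (1 / 10 : ℝ) := by
        rw [mul_pow, ← rpow_mul_natCast m.cast_nonneg]
        congr 2
        field_simp

lemma log_max_sq_le {z m : ℕ} (hz : 3 ≤ z) :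
    log (max z (m ^ 2) : ℕ) ≤ log z * (1 + 3 * log m) := by
  have hlogz : 1 ≤ log z := by
    rw [le_log_iff_exp_le (by positivity)]
    exact exp_one_lt_three.le.trans (by exact_mod_cast hz)
  have hlogm : 0 ≤ log m := log_natCast_nonneg m
  rcases max_choice z (m ^ 2) with h | h <;> rw [h]
  · nlinarith
  · rw [Nat.cast_pow, log_pow, Nat.cast_two]
    nlinarith

/-- The setting of the large values estimate: `X` avoids at least `k` residue classes modulo every
prime in `(z, y]`, and `δ`, the spacing of the frequencies at which its exponential sum is sampled,
is so small that it neither resolves the scale of `X` nor confuses fractions whose denominators are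
at most `y ^ k`. -/
structure IsSifted (X : Finset ℤ) (k y z : ℕ) (δ : ℝ) : Prop where
  one_le_dim : 1 ≤ k
  dim_le : k ≤ z
  three_le : 3 ≤ z
  two_le : 2 ≤ y
  pos : 0 < δ
  le_one : δ ≤ 1
  mul_pow_lt_one : 2 * δ * ((y ^ k : ℕ) : ℝ) ^ 4 < 1
  mul_abs_le : ∀ n ∈ X, δ * |(n : ℝ)| ≤ 1 / 8
  card_image_add_le : ∀ p : ℕ, p.Prime → z < p → p ≤ y →
    (X.image (Int.cast : ℤ → ZMod p)).card + k ≤ p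

namespace IsSifted

variable {X : Finset ℤ} {Θ : Finset UnitAddCircle} {k y z : ℕ} {δ : ℝ}

lemma log_pos (h : IsSifted X k y z δ) : 0 < log y ∧ 0 < log z :=
  ⟨Real.log_pos (by exact_mod_cast h.two_le),
    Real.log_pos (by exact_mod_cast (by linarith [h.three_le] : 1 < z))⟩

-- At most `|Θ| ^ 2` primes are discarded for the spacing; raising `z` to `|Θ| ^ 2` makes them cost
-- only a constant factor.
lemma sum_norm_expSum_sq_le_log_max (h : IsSifted X k y z δ)
    (hΘ : ∀ α ∈ Θ, ∀ β ∈ Θ, ‖α - β‖ ≤ δ → α = β) :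
    δ * ∑ α ∈ Θ, ‖expSum X α‖ ^ 2 ≤
      4 * X.card * (3 * exp 8 * log (max z (Θ.card ^ 2) : ℕ) / log y) ^ k := by
  obtain ⟨R, hR, hsieve⟩ :=
    exists_sum_norm_expSum_sq_le h.pos h.le_one h.mul_pow_lt_one h.mul_abs_le hΘ
  set z' := max z (Θ.card ^ 2)
  set S := (Nat.primesLE y).filter (z' < ·) \ R
  have hS : ∀ p ∈ S, p.Prime ∧ p ≤ y ∧ z' < p := fun p hp => by
    simp only [S, Finset.mem_sdiff, Finset.mem_filter, Nat.mem_primesLE] at hp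
    tauto
  have hzz' : z ≤ z' := le_max_left _ _
  have hz' : 3 ≤ z' := h.three_le.trans hzz'
  have hsum := hsieve k S Finset.sdiff_disjoint fun p hp =>
    have hzp := hzz'.trans_lt (hS p hp).2.2
    ⟨(hS p hp).1, h.dim_le.trans_lt hzp, h.card_image_add_le p (hS p hp).1 hzp (hS p hp).2.1⟩
  have hlower : (log y / (3 * exp 8 * log z')) ^ k ≤ sieveSum (fun p => k / (p - k)) S (y ^ k) :=
    log_div_pow_le_sieveSum (by omega) (h.dim_le.trans hzz') (hR.trans (le_max_right _ _)) y
  have hlogz' : 0 < log z' := Real.log_pos (by exact_mod_cast (by omega : 1 < z'))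
  have hpos : 0 < (log y / (3 * exp 8 * log z')) ^ k :=
    pow_pos (div_pos h.log_pos.1 (by positivity)) k
  rw [← inv_div (log y), inv_pow, ← div_eq_mul_inv, le_div_iff₀ hpos, mul_assoc,
    mul_comm (∑ α ∈ Θ, _)]
  refine hsum.trans' (mul_le_mul_of_nonneg_left ?_ h.pos.le)
  exact mul_le_mul_of_nonneg_right hlower (Finset.sum_nonneg fun _ _ => sq_nonneg _)

theorem sum_norm_expSum_sq_le (h : IsSifted X k y z δ)
    (hΘ : ∀ α ∈ Θ, ∀ β ∈ Θ, ‖α - β‖ ≤ δ → α = β) (hΘne : Θ.Nonempty) :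
    δ * ∑ α ∈ Θ, ‖expSum X α‖ ^ 2 ≤
      4 * (93 * k * exp 8) ^ k * (log z / log y) ^ k * X.card * (Θ.card : ℝ) ^ (1 / 10 : ℝ) := by
  have hcard : 1 ≤ Θ.card := hΘne.card_pos
  obtain ⟨hlogy, hlogz⟩ := h.log_pos
  calc δ * ∑ α ∈ Θ, ‖expSum X α‖ ^ 2
      ≤ 4 * X.card * (3 * exp 8 * log (max z (Θ.card ^ 2) : ℕ) / log y) ^ k :=
        h.sum_norm_expSum_sq_le_log_max hΘ
    _ ≤ 4 * X.card * (3 * exp 8 * (log z * (1 + 3 * log Θ.card)) / log y) ^ k := by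
        gcongr
        exact log_max_sq_le h.three_le
    _ = 4 * X.card * (3 * exp 8) ^ k * (log z / log y) ^ k * (1 + 3 * log Θ.card) ^ k := by
        simp only [mul_pow, div_pow]
        ring
    _ ≤ 4 * X.card * (3 * exp 8) ^ k * (log z / log y) ^ k *
          ((31 * k : ℝ) ^ k * (Θ.card : ℝ) ^ (1 / 10 : ℝ)) := by
        gcongr
        exact one_add_mul_log_pow_le h.one_le_dim hcard
    _ = 4 * (93 * k * exp 8) ^ k * (log z / log y) ^ k * X.card *
          (Θ.card : ℝ) ^ (1 / 10 : ℝ) := by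
        rw [show (93 * k * exp 8 : ℝ) = 3 * exp 8 * (31 * k) by ring, mul_pow (3 * exp 8)]
        ring

theorem sum_norm_expSum_rpow_le (h : IsSifted X k y z δ)
    (hΘ : ∀ α ∈ Θ, ∀ β ∈ Θ, ‖α - β‖ ≤ δ → α = β) :
    ∑ α ∈ Θ, ‖expSum X α‖ ^ (5 / 2 : ℝ) ≤
      9 * (4 * (93 * k * exp 8) ^ k * (log z / log y) ^ k * X.card / δ) ^ (5 / 4 : ℝ) := by
  classical
  obtain ⟨hlogy, hlogz⟩ := h.log_pos
  have hδ := h.pos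
  have hmoment := sum_rpow_le_of_sum_sq_le (v := fun α => ‖expSum X α‖) (T := Θ) (α := 1 / 10)
    (q := 5 / 2) (K := 4 * (93 * k * exp 8) ^ k * (log z / log y) ^ k * X.card / δ)
    (fun α => norm_nonneg _) (by positivity) (by norm_num) (by norm_num) fun Θ' hΘ' hne => by
      rw [div_mul_eq_mul_div, le_div_iff₀' hδ]
      exact h.sum_norm_expSum_sq_le (fun α hα β hβ => hΘ α (hΘ' hα) β (hΘ' hβ)) hne
  norm_num at hmoment ⊢
  exact hmoment

end IsSifted

end LargeValues

section Fourier

variable {P : ℕ} [Fact P.Prime]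

lemma FTP_eq_sum_stdAddChar (f : ZMod P → ℝ) (t : ZMod P) :
    FTP f t = 1 / P * ∑ y, f y * ZMod.stdAddChar (t * y) := by
  rw [FTP]
  congr! 3 with y
  have hty : t * y = (((t.val * y.val : ℕ) : ℤ) : ZMod P) := by
    push_cast
    rw [ZMod.natCast_zmod_val, ZMod.natCast_zmod_val]
  rw [hty, ZMod.stdAddChar_coe]
  push_cast
  ring_nf

lemma FTP_fCfun (C : Finset (ZMod P)) (t : ZMod P) :
    FTP (fCfun C) t = (∑ y ∈ C, ZMod.stdAddChar (t * y)) / C.card := by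
  have hP : (P : ℂ) ≠ 0 := NeZero.ne _
  simp only [FTP_eq_sum_stdAddChar, fCfun, Complex.ofReal_mul, Complex.ofReal_div,
    Complex.ofReal_natCast, apply_ite Complex.ofReal, Complex.ofReal_one, Complex.ofReal_zero,
    mul_assoc, ite_mul, one_mul, zero_mul, ← Finset.mul_sum, ← Finset.sum_filter,
    Finset.filter_univ_mem]
  field_simp

lemma norm_FTP_fCfun_le_one (C : Finset (ZMod P)) (t : ZMod P) : ‖FTP (fCfun C) t‖ ≤ 1 := by
  rw [FTP_fCfun, norm_div, Complex.norm_natCast]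
  refine div_le_one_of_le₀ ((norm_sum_le _ _).trans ?_) C.card.cast_nonneg
  simp only [AddChar.norm_apply, Finset.sum_const, nsmul_eq_mul, mul_one, le_refl]

lemma FTP_fCfun_image_natCast {X : Finset ℕ} (hX : Set.InjOn (Nat.cast : ℕ → ZMod P) X)
    (t : ZMod P) :
    FTP (fCfun (X.image (Nat.cast : ℕ → ZMod P))) t =
      expSum (X.map Nat.castEmbedding) (ZMod.toAddCircle t) / X.card := by
  rw [FTP_fCfun, Finset.sum_image hX, Finset.card_image_of_injOn hX, expSum, Finset.sum_map]
  simp only [Nat.castEmbedding_apply, fourier_toAddCircle, Int.cast_natCast]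

lemma FTP_convP (f g : ZMod P → ℝ) (t : ZMod P) : FTP (convP f g) t = FTP f t * FTP g t := by
  have htranslate (y : ZMod P) : ∑ n, (f (n - y) * g y : ℂ) * ZMod.stdAddChar (t * n) =
      (∑ n, f n * ZMod.stdAddChar (t * n)) * (g y * ZMod.stdAddChar (t * y)) := by
    rw [Finset.sum_mul, ← Equiv.sum_comp (Equiv.addRight y)]
    refine Finset.sum_congr rfl fun n _ => ?_
    rw [Equiv.coe_addRight, add_sub_cancel_right, mul_add, AddChar.map_add_eq_mul]
    ring
  have hconv (n : ZMod P) : convP f g n * ZMod.stdAddChar (t * n) =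
      1 / P * ∑ y, (f (n - y) * g y : ℂ) * ZMod.stdAddChar (t * n) := by
    rw [convP, ← Finset.sum_mul, ← mul_assoc]
    push_cast
    rfl
  simp only [FTP_eq_sum_stdAddChar, hconv]
  rw [← Finset.mul_sum, Finset.sum_comm, Finset.sum_congr rfl fun y _ => htranslate y,
    ← Finset.mul_sum, mul_mul_mul_comm, mul_assoc (1 / (P : ℂ))]

lemma addChar_sum {ι A M : Type*} [AddCommMonoid A] [CommMonoid M] (ψ : AddChar A M)
    (s : Finset ι) (f : ι → A) : ψ (∑ i ∈ s, f i) = ∏ i ∈ s, ψ (f i) :=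
  map_prod ψ.toMonoidHom (fun i => Multiplicative.ofAdd (f i)) s

theorem LamL_mul_eq_sum_prod_FTP {s : ℕ} (cc : Fin s → ℤ) (f : ZMod P → ℝ) :
    (LamL cc f : ℂ) * P = P ^ s * ∑ t : ZMod P, ∏ i, FTP f (cc i * t) := by
  have hP : (P : ℂ) ≠ 0 := NeZero.ne _
  have hprod (t : ZMod P) : P ^ s * ∏ i, FTP f (cc i * t) =
      ∑ n : Fin s → ZMod P, (∏ i, (f (n i) : ℂ)) *
        ZMod.stdAddChar (t * ∑ i, (cc i : ZMod P) * n i) := by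
    simp only [FTP_eq_sum_stdAddChar, Finset.prod_mul_distrib, Finset.prod_const, Finset.card_univ,
      Fintype.card_fin, Finset.prod_univ_sum, Fintype.piFinset_univ]
    rw [← mul_assoc, ← mul_pow, mul_one_div_cancel hP, one_pow, one_mul]
    refine Finset.sum_congr rfl fun n _ => ?_
    rw [Finset.mul_sum, addChar_sum]
    simp only [mul_left_comm t, mul_assoc]
  rw [Finset.mul_sum, Finset.sum_congr rfl fun t _ => hprod t, Finset.sum_comm]
  simp only [← Finset.mul_sum, AddChar.sum_mulShift _ (ZMod.isPrimitive_stdAddChar P), ZMod.card]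
  rw [LamL, Finset.sum_filter, Complex.ofReal_sum, Finset.sum_mul]
  refine Finset.sum_congr rfl fun n _ => ?_
  split_ifs <;> simp

end Fourier

section Comparison

lemma norm_one_sub_prod_le {ι : Type*} (s : Finset ι) {z : ι → ℂ} (hz : ∀ i ∈ s, ‖z i‖ ≤ 1) :
    ‖1 - ∏ i ∈ s, z i‖ ≤ ∑ i ∈ s, ‖z i - 1‖ := by
  classical
  induction s using Finset.induction_on with
  | empty => simp
  | insert i s hi ih =>
    rw [Finset.forall_mem_insert] at hz
    rw [Finset.prod_insert hi, Finset.sum_insert hi, add_comm,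
      show 1 - z i * ∏ j ∈ s, z j = z i * (1 - ∏ j ∈ s, z j) + (1 - z i) by ring,
      norm_sub_rev (z i)]
    refine (norm_add_le _ _).trans (add_le_add_left ?_ _)
    rw [norm_mul]
    exact (mul_le_of_le_one_left (norm_nonneg _) hz.1).trans (ih hz.2)

lemma rpow_mul_norm_one_sub_prod_le {s : ℕ} (hs : 2 ≤ s) {z : Fin s → ℂ} (hz : ∀ i, ‖z i‖ ≤ 1)
    {q x ε₁ ε₂ : ℝ} (hq : 0 ≤ q) (hx : 0 ≤ x) (hx1 : x ≤ 1) (hε₁ : 0 ≤ ε₁) (hε₂ : 0 ≤ ε₂)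
    (h : ε₁ < x → ∀ i, ‖z i - 1‖ ≤ ε₂) :
    x ^ q * ‖1 - ∏ i, z i‖ ≤ s * (ε₂ + ε₁ ^ q) := by
  have hs' : (2 : ℝ) ≤ s := by exact_mod_cast hs
  have : 0 ≤ x ^ q := Real.rpow_nonneg hx q
  have hεq : 0 ≤ ε₁ ^ q := Real.rpow_nonneg hε₁ q
  rcases lt_or_ge ε₁ x with hlt | hle
  · have hsum : ‖1 - ∏ i, z i‖ ≤ s * ε₂ :=
      (norm_one_sub_prod_le _ fun i _ => hz i).trans <|
        (Finset.sum_le_sum fun i _ => h hlt i).trans_eq (by simp)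
    nlinarith [mul_le_of_le_one_left (norm_nonneg (1 - ∏ i, z i)) (Real.rpow_le_one hx hx1 hq)]
  · have htwo : ‖1 - ∏ i, z i‖ ≤ 2 := by
      refine (norm_sub_le _ _).trans ?_
      rw [norm_one, norm_prod]
      linarith [Finset.prod_le_one (s := Finset.univ) (fun i _ => norm_nonneg (z i))
        fun i _ => hz i]
    nlinarith [mul_le_mul (Real.rpow_le_rpow hx hle hq) htwo (norm_nonneg _) hεq]

lemma sum_rpow_half_mul_mul_le {G : Type*} [Fintype G] {g : G → ℝ} (hg : ∀ x, 0 ≤ g x)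
    (e : Fin 3 → Equiv.Perm G) :
    ∑ x, g (e 0 x) ^ (1 / 2 : ℝ) * g (e 1 x) * g (e 2 x) ≤ ∑ x, g x ^ (5 / 2 : ℝ) := by
  have hamgm (x : G) : g (e 0 x) ^ (1 / 2 : ℝ) * g (e 1 x) * g (e 2 x) ≤
      1 / 5 * g (e 0 x) ^ (5 / 2 : ℝ) + 2 / 5 * g (e 1 x) ^ (5 / 2 : ℝ) +
        2 / 5 * g (e 2 x) ^ (5 / 2 : ℝ) := by
    have hroot (y : G) (w : ℝ) : (g y ^ (5 / 2 : ℝ)) ^ w = g y ^ (5 / 2 * w) :=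
      (Real.rpow_mul (hg y) _ _).symm
    have := Real.geom_mean_le_arith_mean3_weighted (w₁ := 1 / 5) (w₂ := 2 / 5) (w₃ := 2 / 5)
      (by norm_num) (by norm_num) (by norm_num) (Real.rpow_nonneg (hg (e 0 x)) (5 / 2))
      (Real.rpow_nonneg (hg (e 1 x)) (5 / 2)) (Real.rpow_nonneg (hg (e 2 x)) (5 / 2)) (by norm_num)
    simp only [hroot] at this
    norm_num at this ⊢
    exact this
  refine (Finset.sum_le_sum fun x _ => hamgm x).trans_eq ?_
  simp only [Finset.sum_add_distrib, ← Finset.mul_sum, Equiv.sum_comp (e _)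
    fun x => g x ^ (5 / 2 : ℝ)]
  ring

lemma norm_prod_sub_prod_mul_le {w z : Fin 3 → ℂ} (hw : ‖w 0‖ ≤ 1) (hz : ∀ i, ‖z i‖ ≤ 1)
    {ε₁ ε₂ : ℝ} (hε₁ : 0 ≤ ε₁) (hε₂ : 0 ≤ ε₂) (h : ε₁ < ‖w 0‖ → ∀ i, ‖z i - 1‖ ≤ ε₂) :
    ‖∏ i, w i - ∏ i, w i * z i‖ ≤
      3 * (ε₂ + ε₁ ^ (1 / 2 : ℝ)) * (‖w 0‖ ^ (1 / 2 : ℝ) * ‖w 1‖ * ‖w 2‖) := by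
  have hfactor := rpow_mul_norm_one_sub_prod_le (q := 1 / 2) (by norm_num) hz (by norm_num)
    (norm_nonneg _) hw hε₁ hε₂ h
  have hsq : ‖w 0‖ = ‖w 0‖ ^ (1 / 2 : ℝ) * ‖w 0‖ ^ (1 / 2 : ℝ) := by
    rw [← Real.sqrt_eq_rpow, Real.mul_self_sqrt (norm_nonneg _)]
  calc ‖∏ i, w i - ∏ i, w i * z i‖ = ‖w 0‖ * ‖w 1‖ * ‖w 2‖ * ‖1 - ∏ i, z i‖ := by
        rw [Finset.prod_mul_distrib, ← mul_one_sub, norm_mul, norm_prod, Fin.prod_univ_three]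
    _ = ‖w 0‖ ^ (1 / 2 : ℝ) * ‖1 - ∏ i, z i‖ * (‖w 0‖ ^ (1 / 2 : ℝ) * ‖w 1‖ * ‖w 2‖) := by
        nth_rw 1 [hsq]
        ring
    _ ≤ 3 * (ε₂ + ε₁ ^ (1 / 2 : ℝ)) * (‖w 0‖ ^ (1 / 2 : ℝ) * ‖w 1‖ * ‖w 2‖) :=
        mul_le_mul_of_nonneg_right hfactor (by positivity)

theorem abs_LamL_sub_LamL_convP_le {P : ℕ} [Fact P.Prime] {cc : Fin 3 → ℤ}
    (hcc : ∀ i, (cc i : ZMod P) ≠ 0) (A B : Finset (ZMod P)) {ε₁ ε₂ : ℝ} (hε₁ : 0 ≤ ε₁)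
    (hε₂ : 0 ≤ ε₂)
    (h : ∀ t, ε₁ < ‖FTP (fCfun A) t‖ →
      ∀ i, ‖FTP (fCfun B) (cc i * (cc 0 : ZMod P)⁻¹ * t) - 1‖ ≤ ε₂) :
    |LamL cc (fCfun A) - LamL cc (convP (fCfun A) (fCfun B))| ≤
      3 * (ε₂ + ε₁ ^ (1 / 2 : ℝ)) * P ^ 2 * ∑ t, ‖FTP (fCfun A) t‖ ^ (5 / 2 : ℝ) := by
  set f := FTP (fCfun A)
  set g := FTP (fCfun B)
  have hterm (t : ZMod P) : ‖∏ i, f (cc i * t) - ∏ i, f (cc i * t) * g (cc i * t)‖ ≤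
      3 * (ε₂ + ε₁ ^ (1 / 2 : ℝ)) *
        (‖f (cc 0 * t)‖ ^ (1 / 2 : ℝ) * ‖f (cc 1 * t)‖ * ‖f (cc 2 * t)‖) :=
    norm_prod_sub_prod_mul_le (norm_FTP_fCfun_le_one A _) (fun i => norm_FTP_fCfun_le_one B _)
      hε₁ hε₂ fun ht i => by simpa only [mul_assoc, inv_mul_cancel_left₀ (hcc 0)] using h _ ht i
  have hfourier : (LamL cc (fCfun A) - LamL cc (convP (fCfun A) (fCfun B)) : ℂ) =
      P ^ 2 * ∑ t, (∏ i, f (cc i * t) - ∏ i, f (cc i * t) * g (cc i * t)) := by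
    apply mul_right_cancel₀ (NeZero.ne (P : ℂ))
    rw [sub_mul, LamL_mul_eq_sum_prod_FTP, LamL_mul_eq_sum_prod_FTP, Finset.sum_sub_distrib]
    simp only [FTP_convP, f, g]
    ring
  have hsum : ∑ t, ‖f (cc 0 * t)‖ ^ (1 / 2 : ℝ) * ‖f (cc 1 * t)‖ * ‖f (cc 2 * t)‖ ≤
      ∑ t, ‖f t‖ ^ (5 / 2 : ℝ) :=
    sum_rpow_half_mul_mul_le (fun t => norm_nonneg (f t)) fun i => Equiv.mulLeft₀ _ (hcc i)
  calc |LamL cc (fCfun A) - LamL cc (convP (fCfun A) (fCfun B))|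
      = P ^ 2 * ‖∑ t, (∏ i, f (cc i * t) - ∏ i, f (cc i * t) * g (cc i * t))‖ := by
        rw [← Real.norm_eq_abs, ← Complex.norm_real, Complex.ofReal_sub, hfourier, norm_mul,
          norm_pow, Complex.norm_natCast]
    _ ≤ P ^ 2 * (3 * (ε₂ + ε₁ ^ (1 / 2 : ℝ)) * ∑ t, ‖f t‖ ^ (5 / 2 : ℝ)) := by
        gcongr
        refine (norm_sum_le _ _).trans ((Finset.sum_le_sum fun t _ => hterm t).trans ?_)
        rw [← Finset.mul_sum]
        exact mul_le_mul_of_nonneg_left hsum (by positivity)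
    _ = 3 * (ε₂ + ε₁ ^ (1 / 2 : ℝ)) * P ^ 2 * ∑ t, ‖f t‖ ^ (5 / 2 : ℝ) := by ring

end Comparison

section Residues

lemma card_add_card_le_of_mul_add_ne_zero {K ι : Type*} [Field K] [Fintype K] [Fintype ι]
    {a b : ι → K} (ha : ∀ i, a i ≠ 0) (hab : ∀ i j, j ≠ i → a i * b j - b i * a j ≠ 0)
    {Y : Finset K} (hY : ∀ u ∈ Y, ∀ i, a i * u + b i ≠ 0) :
    Y.card + Fintype.card ι ≤ Fintype.card K := by
  classical
  have hinj : Function.Injective fun i => -b i / a i := fun i j hij => by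
    by_contra hne
    refine hab i j (Ne.symm hne) ?_
    rw [div_eq_div_iff (ha i) (ha j)] at hij
    linear_combination hij
  have hdisj : Disjoint Y (Finset.univ.image fun i => -b i / a i) := by
    rw [Finset.disjoint_right, Finset.forall_mem_image]
    intro i _ hi
    exact hY _ hi i (by rw [mul_div_cancel₀ _ (ha i), neg_add_cancel])
  rw [← Finset.card_univ, ← Finset.card_image_of_injective _ hinj,
    ← Finset.card_union_of_disjoint hdisj]
  exact Finset.card_le_univ _

/-- The discriminant `Δ(F) = ∏ aᵢ ∏_{i ≠ j} (aᵢ bⱼ - bᵢ aⱼ)` of `F(n) = ∏ (aᵢ n + bᵢ)`; the primes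
not dividing it are those modulo which the `k` linear factors have `k` distinct roots. -/
def formsDiscr {k : ℕ} (a b : Fin k → ℤ) : ℤ :=
  (∏ i, a i) * ∏ i, ∏ j ∈ Finset.univ.filter (fun j => j ≠ i), (a i * b j - b i * a j)

lemma dvd_formsDiscr_left {k : ℕ} (a b : Fin k → ℤ) (i : Fin k) : a i ∣ formsDiscr a b :=
  (Finset.dvd_prod_of_mem a (Finset.mem_univ i)).mul_right _

lemma dvd_formsDiscr_right {k : ℕ} (a b : Fin k → ℤ) {i j : Fin k} (hij : j ≠ i) :
    a i * b j - b i * a j ∣ formsDiscr a b :=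
  ((Finset.dvd_prod_of_mem (fun j => a i * b j - b i * a j)
    (Finset.mem_filter.2 ⟨Finset.mem_univ j, hij⟩)).trans
      (Finset.dvd_prod_of_mem (fun i => ∏ j ∈ Finset.univ.filter (fun j => j ≠ i),
        (a i * b j - b i * a j)) (Finset.mem_univ i))).mul_left _

lemma card_image_add_le_of_not_dvd {k : ℕ} {a b : Fin k → ℤ} {p : ℕ} [Fact p.Prime]
    (hdisc : ¬ (p : ℤ) ∣ formsDiscr a b) {M : ℤ} (hM : ¬ (p : ℤ) ∣ M) (b₀ : ℤ) {X : Finset ℤ}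
    (hX : ∀ n ∈ X, ¬ (p : ℤ) ∣ ∏ i, (a i * (b₀ + n * M) + b i)) :
    (X.image (Int.cast : ℤ → ZMod p)).card + k ≤ p := by
  have hne {m : ℤ} (hm : ¬ (p : ℤ) ∣ m) : (m : ZMod p) ≠ 0 :=
    (ZMod.intCast_zmod_eq_zero_iff_dvd m p).not.2 hm
  have := card_add_card_le_of_mul_add_ne_zero (K := ZMod p) (a := fun i => (a i * M : ℤ))
    (b := fun i => (a i * b₀ + b i : ℤ)) (Y := X.image Int.cast) ?_ ?_ ?_
  · rwa [Fintype.card_fin, ZMod.card] at this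
  · intro i
    rw [Int.cast_mul]
    exact mul_ne_zero (hne fun h => hdisc (h.trans (dvd_formsDiscr_left a b i))) (hne hM)
  · intro i j hij
    have hcross : ((a i * b j - b i * a j : ℤ) : ZMod p) ≠ 0 :=
      hne fun h => hdisc (h.trans (dvd_formsDiscr_right a b hij))
    convert mul_ne_zero (hne hM) hcross using 1
    push_cast
    ring
  · refine Finset.forall_mem_image.2 fun n hn i => ?_
    have hfactor : ((a i * (b₀ + n * M) + b i : ℤ) : ZMod p) ≠ 0 := hne fun h =>
      hX n hn (h.trans (Finset.dvd_prod_of_mem (fun i => a i * (b₀ + n * M) + b i)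
        (Finset.mem_univ i)))
    convert hfactor using 1
    push_cast
    ring

end Residues

section Parameters

open Real

lemma prime_dvd_primor_iff {p : ℕ} (hp : p.Prime) (z : ℝ) : p ∣ primor z ↔ p ≤ ⌊z⌋₊ :=
  hp.dvd_primorial_iff

lemma primor_pos (z : ℝ) : 0 < primor z :=
  primorial_pos _

lemma primor_log_div_three_le {N : ℕ} (hN : 1 ≤ N) :
    (primor (log N / 3) : ℝ) ≤ (N : ℝ) ^ (1 / 2 : ℝ) := by
  have hlog4 : log 4 ≤ 3 / 2 := by
    rw [show (4 : ℝ) = 2 ^ 2 by norm_num, log_pow]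
    linarith [log_two_lt_d9]
  calc (primor (log N / 3) : ℝ) ≤ (4 : ℝ) ^ ⌊log N / 3⌋₊ :=
        mod_cast primorial_le_four_pow ⌊log N / 3⌋₊
    _ ≤ (4 : ℝ) ^ (log N / 3) := by
        rw [← rpow_natCast]
        exact rpow_le_rpow_of_exponent_le (by norm_num)
          (Nat.floor_le (div_nonneg (log_natCast_nonneg N) (by norm_num)))
    _ ≤ (N : ℝ) ^ (1 / 2 : ℝ) := by
        rw [rpow_def_of_pos (by norm_num), rpow_def_of_pos (by exact_mod_cast hN), exp_le_exp]
        nlinarith [log_natCast_nonneg N]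

lemma not_dvd_of_mem_SFset {F : ℤ → ℤ} {N : ℕ} {z : ℝ} {n : ℕ} (hn : n ∈ SFset F N z) {p : ℕ}
    (hp : p.Prime) (hpz : p ≤ ⌊z⌋₊) : ¬ (p : ℤ) ∣ F n := fun h => by
  have hgcd := (Finset.mem_filter.1 hn).2
  have hdvd := Int.dvd_gcd h (Int.natCast_dvd_natCast.2 ((prime_dvd_primor_iff hp z).2 hpz))
  rw [hgcd] at hdvd
  exact hp.one_lt.ne' (Nat.dvd_one.1 (by exact_mod_cast hdvd))

lemma mul_le_of_mem_Abset {A : Finset ℕ} {N M b₀ n : ℕ} (hA : A ⊆ Finset.Icc 1 N)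
    (hn : n ∈ Abset A N M b₀) : n * M ≤ N :=
  (Nat.le_add_left _ _).trans (Finset.mem_Icc.1 (hA (Finset.mem_filter.1 hn).2)).2

lemma injOn_natCast_Abset {A : Finset ℕ} {N M b₀ P : ℕ} (hA : A ⊆ Finset.Icc 1 N)
    (hNP : N ≤ P * M) : Set.InjOn (Nat.cast : ℕ → ZMod P) (Abset A N M b₀) := by
  intro m hm n hn hmn
  have hm' := Finset.mem_Icc.1 (hA (Finset.mem_filter.1 hm).2)
  have hn' := Finset.mem_Icc.1 (hA (Finset.mem_filter.1 hn).2)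
  rw [← Int.cast_natCast m, ← Int.cast_natCast n, ZMod.intCast_eq_intCast_iff_dvd_sub] at hmn
  have hlt : |(n - m : ℤ)| < P := by
    rw [abs_lt]
    zify at hm' hn' hNP
    constructor <;> nlinarith
  linarith [Int.eq_zero_of_abs_lt_dvd hmn hlt]

lemma rpow_half_le_of_le_mul_primor {N P : ℕ} (hN : 1 ≤ N) (hNP : N ≤ P * primor (log N / 3)) :
    (N : ℝ) ^ (1 / 2 : ℝ) ≤ P := by
  have hN' : (0 : ℝ) < (N : ℝ) ^ (1 / 2 : ℝ) := rpow_pos_of_pos (by exact_mod_cast hN) _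
  refine le_of_mul_le_mul_right ?_ hN'
  calc (N : ℝ) ^ (1 / 2 : ℝ) * (N : ℝ) ^ (1 / 2 : ℝ) = N := by
        rw [← sqrt_eq_rpow, mul_self_sqrt N.cast_nonneg]
    _ ≤ P * primor (log N / 3) := by exact_mod_cast hNP
    _ ≤ P * (N : ℝ) ^ (1 / 2 : ℝ) := by
        gcongr
        exact primor_log_div_three_le hN

lemma floor_rpow_pow_le {k N : ℕ} (hk : 1 ≤ k) :
    ((⌊(N : ℝ) ^ (1 / (8 * k) : ℝ)⌋₊ ^ k : ℕ) : ℝ) ^ 4 ≤ (N : ℝ) ^ (1 / 2 : ℝ) := by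
  have : (0 : ℝ) < k := by exact_mod_cast hk
  have hN : (0 : ℝ) ≤ N := N.cast_nonneg
  calc ((⌊(N : ℝ) ^ (1 / (8 * k) : ℝ)⌋₊ ^ k : ℕ) : ℝ) ^ 4
      ≤ (((N : ℝ) ^ (1 / (8 * k) : ℝ)) ^ k) ^ 4 := by
        push_cast
        gcongr
        exact Nat.floor_le (by positivity)
    _ = (N : ℝ) ^ (1 / 2 : ℝ) := by
        rw [← rpow_mul_natCast hN, ← rpow_mul_natCast hN]
        congr 1
        push_cast
        field_simp
        norm_num

lemma card_image_Abset_add_le {k : ℕ} {a b : Fin k → ℤ} {N : ℕ} {w : ℝ} {A : Finset ℕ}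
    (hA : A ⊆ SFset (fun n => ∏ i, (a i * n + b i)) N w) (M b₀ : ℕ) {p : ℕ} (hp : p.Prime)
    (hdisc : ¬ (p : ℤ) ∣ formsDiscr a b) (hM : ¬ p ∣ M) (hpw : p ≤ ⌊w⌋₊) :
    (((Abset A N M b₀).map Nat.castEmbedding).image (Int.cast : ℤ → ZMod p)).card + k ≤ p := by
  have : Fact p.Prime := ⟨hp⟩
  refine card_image_add_le_of_not_dvd hdisc (Int.natCast_dvd_natCast.not.2 hM) b₀ ?_
  simp only [Finset.forall_mem_map, Nat.castEmbedding_apply]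
  intro n hn
  exact_mod_cast not_dvd_of_mem_SFset (hA (Finset.mem_filter.1 hn).2) hp hpw

lemma isSifted_Abset {k : ℕ} (hk : 1 ≤ k) {a b : Fin k → ℤ} (hdisc : formsDiscr a b ≠ 0) {N : ℕ}
    (hNz : k + (formsDiscr a b).natAbs + 3 ≤ ⌊log N / 3⌋₊)
    (hNy : 2 ≤ ⌊(N : ℝ) ^ (1 / (8 * k) : ℝ)⌋₊) {A : Finset ℕ}
    (hA : A ⊆ SFset (fun n => ∏ i, (a i * n + b i)) N ((N : ℝ) ^ (1 / (4 * k + 1) : ℝ))) (b₀ : ℕ)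
    {P : ℕ} (hNP : N ≤ P * primor (log N / 3)) :
    IsSifted ((Abset A N (primor (log N / 3)) b₀).map Nat.castEmbedding) k
      ⌊(N : ℝ) ^ (1 / (8 * k) : ℝ)⌋₊ ⌊log N / 3⌋₊ (1 / (8 * P)) := by
  have hk' : (1 : ℝ) ≤ k := by exact_mod_cast hk
  have hN : 1 ≤ N := Nat.one_le_iff_ne_zero.2 fun h => by simp [h] at hNz
  have hNP' := rpow_half_le_of_le_mul_primor hN hNP
  have hP : 1 ≤ P := Nat.pos_of_mul_pos_right (hN.trans hNP)
  have hP' : (1 : ℝ) ≤ P := by exact_mod_cast hP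
  have hAIcc : A ⊆ Finset.Icc 1 N := hA.trans (Finset.filter_subset _ _)
  refine ⟨hk, by omega, by omega, hNy, by positivity, ?_, ?_, ?_, ?_⟩
  · rw [div_le_one (by positivity)]
    linarith
  · have := (floor_rpow_pow_le (N := N) hk).trans hNP'
    rw [mul_one_div, div_mul_eq_mul_div, div_lt_one (by positivity)]
    linarith
  · simp only [Finset.forall_mem_map, Nat.castEmbedding_apply, Int.cast_natCast, Nat.abs_cast]
    intro n hn
    have hnP : (n : ℝ) ≤ P := by
      exact_mod_cast le_of_mul_le_mul_right ((mul_le_of_mem_Abset hAIcc hn).trans hNP)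
        (primor_pos _)
    rw [div_mul_eq_mul_div, one_mul, div_le_div_iff₀ (by positivity) (by norm_num)]
    linarith
  · intro p hp hzp hpy
    refine card_image_Abset_add_le hA _ b₀ hp (fun h => ?_)
      (fun h => hzp.not_ge ((prime_dvd_primor_iff hp _).1 h)) ?_
    · have := Nat.le_of_dvd (Int.natAbs_pos.2 hdisc) (Int.natCast_dvd.1 h)
      omega
    · refine hpy.trans (Nat.floor_le_floor (rpow_le_rpow_of_exponent_le (by exact_mod_cast hN) ?_))
      exact one_div_le_one_div_of_le (by positivity) (by linarith)

lemma eq_of_norm_toAddCircle_sub_lt {n : ℕ} [NeZero n] {s t : ZMod n}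
    (hst : n * ‖ZMod.toAddCircle s - ZMod.toAddCircle t‖ < 1) : s = t := by
  by_contra hne
  have hsep := one_le_mul_norm_sub (NeZero.pos n) one_pos (u := ZMod.toAddCircle (s - t)) (v := 0)
    (by rw [← map_nsmul, nsmul_eq_mul, CharP.cast_eq_zero, zero_mul, map_zero]) (smul_zero _)
    (ZMod.toAddCircle_eq_zero.not.2 (sub_ne_zero.2 hne))
  rw [sub_zero, mul_one, map_sub] at hsep
  exact hst.not_ge hsep

theorem sum_norm_FTP_rpow_le {P : ℕ} [Fact P.Prime] {X : Finset ℕ}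
    (hX : Set.InjOn (Nat.cast : ℕ → ZMod P) X) {k y z : ℕ}
    (h : IsSifted (X.map Nat.castEmbedding) k y z (1 / (8 * P))) :
    ∑ t, ‖FTP (fCfun (X.image (Nat.cast : ℕ → ZMod P))) t‖ ^ (5 / 2 : ℝ) ≤
      9 * (32 * (93 * k * exp 8) ^ k * ((log z / log y) ^ k * P / X.card)) ^ (5 / 4 : ℝ) := by
  have hP : (0 : ℝ) < P := Nat.cast_pos.2 (NeZero.pos P)
  have hcard : (0 : ℝ) ≤ X.card := X.card.cast_nonneg
  obtain ⟨hlogy, hlogz⟩ := h.log_pos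
  have hsep : ∀ α ∈ Finset.univ.image (ZMod.toAddCircle : ZMod P → UnitAddCircle),
      ∀ β ∈ Finset.univ.image (ZMod.toAddCircle : ZMod P → UnitAddCircle),
        ‖α - β‖ ≤ 1 / (8 * P) → α = β := by
    simp only [Finset.forall_mem_image]
    intro s _ t _ hst
    rw [eq_of_norm_toAddCircle_sub_lt (s := s) (t := t)]
    refine (mul_le_mul_of_nonneg_left hst hP.le).trans_lt ?_
    field_simp
    norm_num
  have hmoment := h.sum_norm_expSum_rpow_le hsep
  rw [Finset.sum_image (ZMod.toAddCircle_injective P).injOn, Finset.card_map] at hmoment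
  have hnorm : (X.card : ℝ) ^ (5 / 2 : ℝ) = (X.card * X.card : ℝ) ^ (5 / 4 : ℝ) := by
    rw [← sq, ← rpow_natCast, ← rpow_mul hcard]
    norm_num
  calc ∑ t, ‖FTP (fCfun (X.image (Nat.cast : ℕ → ZMod P))) t‖ ^ (5 / 2 : ℝ)
      = (∑ t : ZMod P, ‖expSum (X.map Nat.castEmbedding) (ZMod.toAddCircle t)‖ ^ (5 / 2 : ℝ)) /
          (X.card * X.card : ℝ) ^ (5 / 4 : ℝ) := by
        simp only [FTP_fCfun_image_natCast hX, norm_div, Complex.norm_natCast,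
          div_rpow (norm_nonneg _) hcard, hnorm, Finset.sum_div]
    _ ≤ 9 * (4 * (93 * k * exp 8) ^ k * (log z / log y) ^ k * X.card / (1 / (8 * P))) ^
          (5 / 4 : ℝ) / (X.card * X.card : ℝ) ^ (5 / 4 : ℝ) := by gcongr
    _ = 9 * (32 * (93 * k * exp 8) ^ k * ((log z / log y) ^ k * P / X.card)) ^ (5 / 4 : ℝ) := by
        rw [mul_div_assoc, ← div_rpow (by positivity) (by positivity), div_eq_mul_inv _ (_ * _),
          div_eq_mul_inv _ (X.card : ℝ), ← div_self_mul_self' (X.card : ℝ)]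
        congr 2
        field_simp
        ring

lemma log_div_log_floor_rpow_le {N : ℕ} {η : ℝ} (hη : 0 < η) (hN : 3 ≤ log N)
    (hNη : 4 ≤ (N : ℝ) ^ η) :
    log ⌊log N / 3⌋₊ / log ⌊(N : ℝ) ^ η⌋₊ ≤ 2 / η * (log (log N) / log N) := by
  have hN' : (0 : ℝ) < N := Nat.cast_pos.2 (Nat.pos_of_ne_zero fun h => by norm_num [h] at hN)
  have hz : log ⌊log N / 3⌋₊ ≤ log (log N) := by
    refine log_le_log (Nat.cast_pos.2 (Nat.floor_pos.2 (by linarith))) ?_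
    exact (Nat.floor_le (by linarith)).trans (by linarith)
  have hfloor : ((N : ℝ) ^ η) ^ (1 / 2 : ℝ) ≤ ⌊(N : ℝ) ^ η⌋₊ := by
    have hsqrt : 2 ≤ √((N : ℝ) ^ η) := le_sqrt_of_sq_le (by linarith)
    rw [← sqrt_eq_rpow]
    nlinarith [sq_sqrt (rpow_nonneg hN'.le η), Nat.lt_floor_add_one ((N : ℝ) ^ η)]
  have hy : η / 2 * log N ≤ log ⌊(N : ℝ) ^ η⌋₊ := by
    have := log_le_log (by positivity) hfloor
    rwa [← rpow_mul hN'.le, log_rpow hN', mul_one_div] at this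
  have hloglog : 0 ≤ log (log N) := log_nonneg (by linarith)
  calc log ⌊log N / 3⌋₊ / log ⌊(N : ℝ) ^ η⌋₊ ≤ log (log N) / (η / 2 * log N) := by gcongr
    _ = 2 / η * (log (log N) / log N) := by field_simp

lemma mul_log_log_div_log_pos {c₀ δ : ℝ} (hc₀ : 0 < c₀) (hδ : 0 < δ) {N : ℕ} (hN : 3 ≤ N) {M : ℕ}
    (hM : 0 < M) (k : ℕ) : 0 < c₀ * δ * log (log N) ^ k / log N ^ k * N / M := by
  have hlog : 1 < log N := by
    rw [lt_log_iff_exp_lt (by positivity)]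
    exact exp_one_lt_three.trans_le (by exact_mod_cast hN)
  have hloglog := log_pos hlog
  positivity

-- The lower bound for `x` compensates the power of `log log N / log N` coming from the sieve.
lemma log_div_log_pow_mul_div_le {k : ℕ} (hk : 1 ≤ k) {c₀ δ K : ℝ} (hc₀ : 0 < c₀) (hδ : 0 < δ)
    (hK : 0 ≤ K) {N : ℕ} (hN : 3 ≤ log N) (hNη : 4 ≤ (N : ℝ) ^ (1 / (8 * k) : ℝ)) {M P : ℕ}
    {x : ℝ} (hP : P ≤ 2 * K * N / M)
    (hx : c₀ * δ * log (log N) ^ k / log N ^ k * N / M ≤ x) (hx₀ : 0 < x) :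
    (log ⌊log N / 3⌋₊ / log ⌊(N : ℝ) ^ (1 / (8 * k) : ℝ)⌋₊) ^ k * P / x ≤
      (16 * k) ^ k * (2 * K / (c₀ * δ)) := by
  have : (1 : ℝ) ≤ k := by exact_mod_cast hk
  have hloglog : 0 ≤ log (log N) := log_nonneg (by linarith)
  have hratio := log_div_log_floor_rpow_le (by positivity) hN hNη
  rw [div_div_eq_mul_div, div_one, ← mul_assoc, show (2 * 8 : ℝ) = 16 by norm_num] at hratio
  rw [div_le_iff₀ hx₀]
  calc (log ⌊log N / 3⌋₊ / log ⌊(N : ℝ) ^ (1 / (8 * k) : ℝ)⌋₊) ^ k * P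
      ≤ (16 * k * (log (log N) / log N)) ^ k * (2 * K * N / M) := by
        gcongr
    _ = (16 * k) ^ k * (2 * K / (c₀ * δ)) *
          (c₀ * δ * log (log N) ^ k / log N ^ k * N / M) := by
        rw [mul_pow, div_pow]
        field_simp
    _ ≤ (16 * k) ^ k * (2 * K / (c₀ * δ)) * x := by gcongr

theorem sum_norm_FTP_Abset_rpow_le {k : ℕ} (hk : 1 ≤ k) {a b : Fin k → ℤ}
    (hdisc : formsDiscr a b ≠ 0) {N : ℕ} (hNz : k + (formsDiscr a b).natAbs + 3 ≤ ⌊log N / 3⌋₊)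
    (hNη : 4 ≤ (N : ℝ) ^ (1 / (8 * k) : ℝ)) {A : Finset ℕ}
    (hA : A ⊆ SFset (fun n => ∏ i, (a i * n + b i)) N ((N : ℝ) ^ (1 / (4 * k + 1) : ℝ))) (b₀ : ℕ)
    {c₀ δ K : ℝ} (hc₀ : 0 < c₀) (hδ : 0 < δ) (hK : 0 ≤ K)
    (hx : c₀ * δ * log (log N) ^ k / log N ^ k * N / primor (log N / 3) ≤
      (Abset A N (primor (log N / 3)) b₀).card)
    {P : ℕ} [Fact P.Prime] (hNP : N ≤ P * primor (log N / 3))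
    (hPN : P ≤ 2 * K * N / primor (log N / 3)) :
    ∑ t, ‖FTP (fCfun ((Abset A N (primor (log N / 3)) b₀).image (Nat.cast : ℕ → ZMod P))) t‖ ^
        (5 / 2 : ℝ) ≤
      9 * (64 * (1488 * k ^ 2 * exp 8) ^ k * K / c₀) ^ (5 / 4 : ℝ) / δ ^ (5 / 4 : ℝ) := by
  have hy : 2 ≤ ⌊(N : ℝ) ^ (1 / (8 * k) : ℝ)⌋₊ := Nat.le_floor (by push_cast; linarith)
  have hlog : 3 ≤ log N := by
    have := (Nat.le_floor_iff' (by norm_num)).1 ((Nat.le_add_left 3 _).trans hNz)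
    push_cast at this
    linarith
  have hN : 3 ≤ N := by exact_mod_cast hlog.trans (log_le_self N.cast_nonneg)
  have hM := primor_pos (log N / 3)
  have hx₀ := (mul_log_log_div_log_pos hc₀ hδ hN hM k).trans_le hx
  have hsifted := isSifted_Abset hk hdisc hNz hy hA b₀ hNP
  obtain ⟨hlogy, hlogz⟩ := hsifted.log_pos
  calc _ ≤ 9 * (32 * (93 * k * exp 8) ^ k * _) ^ (5 / 4 : ℝ) :=
        sum_norm_FTP_rpow_le (injOn_natCast_Abset (hA.trans (Finset.filter_subset _ _)) hNP) hsifted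
    _ ≤ 9 * (32 * (93 * k * exp 8) ^ k * ((16 * k) ^ k * (2 * K / (c₀ * δ)))) ^ (5 / 4 : ℝ) := by
        gcongr
        exact log_div_log_pow_mul_div_le hk hc₀ hδ hK hlog hNη hPN hx hx₀
    _ = 9 * (64 * (1488 * k ^ 2 * exp 8) ^ k * K / c₀) ^ (5 / 4 : ℝ) / δ ^ (5 / 4 : ℝ) := by
        rw [mul_div_assoc 9, ← div_rpow (by positivity) hδ.le,
          show (1488 * k ^ 2 * exp 8 : ℝ) = 93 * k * exp 8 * (16 * k) by ring,
          mul_pow _ (16 * k : ℝ)]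
        congr 2
        field_simp
        ring

lemma exists_forall_ge_le_floor_log {η : ℝ} (hη : 0 < η) (m K : ℕ) :
    ∃ N₁, ∀ N : ℕ, N₁ ≤ N →
      m ≤ ⌊log N / 3⌋₊ ∧ 4 ≤ (N : ℝ) ^ η ∧ (K : ℝ) < (N : ℝ) ^ (1 / 2 : ℝ) := by
  rw [← Filter.eventually_atTop]
  have hcast : Filter.Tendsto (Nat.cast : ℕ → ℝ) .atTop .atTop := tendsto_natCast_atTop_atTop
  have hlog := tendsto_nat_floor_atTop.comp
    ((tendsto_log_atTop.comp hcast).atTop_div_const three_pos)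
  have hpow {η : ℝ} (hη : 0 < η) := (tendsto_rpow_atTop hη).comp hcast
  exact (hlog.eventually_ge_atTop m).and
    (((hpow hη).eventually_ge_atTop 4).and ((hpow one_half_pos).eventually_gt_atTop (K : ℝ)))

end Parameters

section Main

open Real

lemma intCast_zmod_ne_zero_of_natAbs_lt {P : ℕ} {c : ℤ} (hc : c ≠ 0) (hcP : c.natAbs < P) :
    (c : ZMod P) ≠ 0 := fun h =>
  hcP.not_ge (Nat.le_of_dvd (Int.natAbs_pos.2 hc)
    (Int.natCast_dvd.1 ((ZMod.intCast_zmod_eq_zero_iff_dvd c P).1 h)))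

lemma le_mul_of_mul_div_le {N M P : ℕ} (hM : 0 < M) (hP : 0 < P) {c : ℤ}
    (hcP : (c * N / M : ℝ) ≤ P) (hPc : (P : ℝ) ≤ 2 * c * N / M) : N ≤ P * M := by
  have hM' : (0 : ℝ) < M := by exact_mod_cast hM
  have hc : 0 < c := by
    by_contra! hc
    have hc' : (c : ℝ) ≤ 0 := by exact_mod_cast hc
    have hP' : (0 : ℝ) < P := by exact_mod_cast hP
    refine hP'.not_ge (hPc.trans (div_nonpos_of_nonpos_of_nonneg ?_ hM'.le))
    exact mul_nonpos_of_nonpos_of_nonneg (by linarith) N.cast_nonneg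
  rw [div_le_iff₀ hM'] at hcP
  have hc' : (1 : ℝ) ≤ c := by exact_mod_cast hc
  exact_mod_cast (le_mul_of_one_le_left (N.cast_nonneg (α := ℝ)) hc').trans hcP

lemma le_one_of_card_eq_mul {α : Type*} {A S : Finset α} (hAS : A ⊆ S) (hA : A.Nonempty) {δ : ℝ}
    (h : (A.card : ℝ) = δ * S.card) : δ ≤ 1 := by
  have hS : (0 : ℝ) < S.card := by exact_mod_cast (hA.mono hAS).card_pos
  refine le_of_mul_le_mul_right ?_ hS
  rw [← h, one_mul]
  exact_mod_cast Finset.card_le_card hAS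

lemma nonempty_of_le_card_Abset {c₀ δ : ℝ} (hc₀ : 0 < c₀) (hδ : 0 < δ) {N : ℕ} (hN : 3 ≤ N)
    {M : ℕ} (hM : 0 < M) {k b₀ : ℕ} {A : Finset ℕ}
    (hx : c₀ * δ * log (log N) ^ k / log N ^ k * N / M ≤ (Abset A N M b₀).card) : A.Nonempty := by
  have hpos := (mul_log_log_div_log_pos hc₀ hδ hN hM k).trans_le hx
  obtain ⟨n, hn⟩ := Finset.card_pos.1 (Nat.cast_pos.1 hpos)
  exact ⟨_, (Finset.mem_filter.1 hn).2⟩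

lemma sum_filter_pos_le_sum_natAbs {ι : Type*} (s : Finset ι) (c : ι → ℤ) :
    ∑ i ∈ s with 0 < c i, c i ≤ (∑ i ∈ s, (c i).natAbs : ℕ) := by
  rw [Nat.cast_sum]
  exact (Finset.sum_le_sum fun i _ => Int.le_natAbs).trans
    (Finset.sum_le_sum_of_subset_of_nonneg (Finset.filter_subset _ _) fun _ _ _ => by positivity)

theorem stmt5_general
    (k : ℕ) (hk : 1 ≤ k) (a b : Fin k → ℤ)
    (F : ℤ → ℤ) (hF : ∀ n : ℤ, F n = ∏ i, (a i * n + b i)) (hdisc : formsDiscr a b ≠ 0)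
    (cc : Fin 3 → ℤ) (hcc : ∀ i, cc i ≠ 0) (c₀ : ℝ) (hc₀ : 0 < c₀) :
    ∃ (C : ℝ) (N₁ : ℕ), 0 < C ∧
      ∀ N : ℕ, N₁ ≤ N →
      ∀ A : Finset ℕ, A ⊆ SFset F N ((N : ℝ) ^ (1 / (4 * k + 1) : ℝ)) →
      ∀ δ : ℝ, 0 < δ → ∀ b₀ : ℕ,
        c₀ * δ * log (log N) ^ k / log N ^ k * N / primor (log N / 3) ≤
          (Abset A N (primor (log N / 3)) b₀).card →
      ∀ (P : ℕ) [Fact P.Prime],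
        ((∑ i with 0 < cc i, cc i : ℤ) : ℝ) * N / primor (log N / 3) ≤ P →
        P ≤ 2 * ((∑ i with 0 < cc i, cc i : ℤ) : ℝ) * N / primor (log N / 3) →
        ∀ ε₁ ε₂ : ℝ, 0 ≤ ε₁ → 0 ≤ ε₂ →
        ∀ A' : Finset (ZMod P), A' = (Abset A N (primor (log N / 3)) b₀).image Nat.cast →
        ∀ B : Finset (ZMod P),
          (∀ t, ε₁ < ‖FTP (fCfun A') t‖ →
            ∀ i, ‖FTP (fCfun B) (cc i * (cc 0 : ZMod P)⁻¹ * t) - 1‖ ≤ ε₂) →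
          |LamL cc (fCfun A') - LamL cc (convP (fCfun A') (fCfun B))| ≤
            C * (ε₂ + ε₁ ^ (1 / 2 : ℝ)) / δ ^ (5 / 4 : ℝ) * P ^ 2 := by
  obtain rfl : F = fun n => ∏ i, (a i * n + b i) := funext hF
  set K := ∑ i, (cc i).natAbs
  have hccK (i : Fin 3) : (cc i).natAbs ≤ K :=
    Finset.single_le_sum (f := fun j => (cc j).natAbs) (fun j _ => Nat.zero_le _)
      (Finset.mem_univ i)
  have hK : 0 < K := (Int.natAbs_pos.2 (hcc 0)).trans_le (hccK 0)
  have hcK : ((∑ i with 0 < cc i, cc i : ℤ) : ℝ) ≤ K := by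
    exact_mod_cast sum_filter_pos_le_sum_natAbs Finset.univ cc
  obtain ⟨N₁, hN₁⟩ := exists_forall_ge_le_floor_log (η := 1 / (8 * k)) (by positivity)
    (k + (formsDiscr a b).natAbs + 3) K
  refine ⟨27 * (64 * (1488 * k ^ 2 * exp 8) ^ k * K / c₀) ^ (5 / 4 : ℝ), N₁, by positivity, ?_⟩
  rintro N hN A hA δ hδ b₀ hx P _ hcP hPc ε₁ ε₂ hε₁ hε₂ A' rfl B hB
  obtain ⟨hNz, hNη, hKN⟩ := hN₁ N hN
  have hN' : 1 ≤ N := Nat.one_le_iff_ne_zero.2 fun h => by simp [h] at hNz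
  have hNP := le_mul_of_mul_div_le (primor_pos _) (NeZero.pos P) hcP hPc
  have hKP : K < P := by exact_mod_cast hKN.trans_le (rpow_half_le_of_le_mul_primor hN' hNP)
  have hccP (i : Fin 3) := intCast_zmod_ne_zero_of_natAbs_lt (hcc i) ((hccK i).trans_lt hKP)
  have hmoment := sum_norm_FTP_Abset_rpow_le hk hdisc hNz hNη hA b₀ hc₀ hδ K.cast_nonneg hx hNP
    (hPc.trans (by gcongr))
  refine (abs_LamL_sub_LamL_convP_le hccP _ B hε₁ hε₂ hB).trans ?_
  exact (mul_le_mul_of_nonneg_left hmoment (by positivity)).trans_eq (by ring)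

end Main

theorem stmt5
    (k : ℕ) (hk : 1 ≤ k) (a b : Fin k → ℤ) (ha : ∀ i, a i ≠ 0)
    (F : ℤ → ℤ) (hF : ∀ n : ℤ, F n = ∏ i, (a i * n + b i))
    (hdisc : (∏ i, a i) *
      ∏ i, ∏ j ∈ Finset.univ.filter (fun j => j ≠ i), (a i * b j - b i * a j) ≠ 0)
    (hadm : ∀ p : ℕ, p.Prime → ∃ n : ℤ, ¬ ((p : ℤ) ∣ F n))
    (cc : Fin 3 → ℤ) (hcc : ∀ i, cc i ≠ 0) (hti : ∑ i, cc i = 0)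
    (c₀ : ℝ) (hc₀ : 0 < c₀) :
    ∃ (C : ℝ) (N₁ : ℕ), 0 < C ∧
      ∀ N : ℕ, N₁ ≤ N →
      ∀ A : Finset ℕ, A ⊆ SFset F N ((N : ℝ) ^ ((1 : ℝ) / (4 * k + 1))) →
      ∀ δ : ℝ, 0 < δ →
        (A.card : ℝ) = δ * ((SFset F N ((N : ℝ) ^ ((1 : ℝ) / (4 * k + 1)))).card : ℝ) →
      ∀ b₀ : ℕ, b₀ < primor (Real.log N / 3) →
        Int.gcd (F b₀) (primor (Real.log N / 3)) = 1 →
        c₀ * δ * (Real.log (Real.log N)) ^ k / (Real.log N) ^ k *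
            (N : ℝ) / (primor (Real.log N / 3) : ℝ)
          ≤ ((Abset A N (primor (Real.log N / 3)) b₀).card : ℝ) →
      ∀ (P : ℕ) [Fact P.Prime],
        ((∑ i ∈ Finset.univ.filter (fun i => 0 < cc i), cc i : ℤ) : ℝ) *
            (N : ℝ) / (primor (Real.log N / 3) : ℝ) ≤ (P : ℝ) →
        (P : ℝ) ≤ 2 * ((∑ i ∈ Finset.univ.filter (fun i => 0 < cc i), cc i : ℤ) : ℝ) *
            (N : ℝ) / (primor (Real.log N / 3) : ℝ) →
        ∀ ε₁ ε₂ : ℝ, 0 < ε₁ → 0 < ε₂ →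
        ∀ B : Finset (ZMod P),
          (∀ t ∈ (Finset.univ : Finset (Fin 3)).biUnion (fun i =>
              (Finset.univ.filter (fun t : ZMod P =>
                ε₁ < ‖FTP (fCfun ((Abset A N (primor (Real.log N / 3)) b₀).image
                  (fun n : ℕ => (n : ZMod P)))) t‖)).image
                (fun t => ((cc i : ZMod P) * ((cc 0 : ZMod P))⁻¹) * t)),
            ‖FTP (fCfun B) t - 1‖ ≤ ε₂) →
          |LamL cc (fCfun ((Abset A N (primor (Real.log N / 3)) b₀).image
                (fun n : ℕ => (n : ZMod P)))) -
              LamL cc (convP (fCfun ((Abset A N (primor (Real.log N / 3)) b₀).image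
                (fun n : ℕ => (n : ZMod P)))) (fCfun B))|
            ≤ C * (ε₂ + ε₁ ^ ((1 : ℝ) / 2)) / δ ^ 6 * (P : ℝ) ^ 2 := by
  obtain ⟨C, N₁, hC, h⟩ := stmt5_general k hk a b F hF hdisc cc hcc c₀ hc₀
  refine ⟨C, max N₁ 3, hC, ?_⟩
  intro N hN A hA δ hδ hAcard b₀ _ _ hx P _ hcP hPc ε₁ ε₂ hε₁ hε₂ B hB
  have hbound := h N (le_of_max_le_left hN) A hA δ hδ b₀ hx P hcP hPc ε₁ ε₂ hε₁.le hε₂.le _ rfl B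
    fun t ht i => hB _ (Finset.mem_biUnion.2 ⟨i, Finset.mem_univ i,
      Finset.mem_image_of_mem _ (Finset.mem_filter.2 ⟨Finset.mem_univ t, ht⟩)⟩)
  have hδ1 : δ ≤ 1 := le_one_of_card_eq_mul hA (nonempty_of_le_card_Abset hc₀ hδ
    (le_of_max_le_right hN) (primor_pos _) hx) hAcard
  have hδpow : δ ^ 6 ≤ δ ^ (5 / 4 : ℝ) := by
    rw [← Real.rpow_natCast]
    exact Real.rpow_le_rpow_of_exponent_ge hδ hδ1 (by norm_num)
  exact hbound.trans (by gcongr)
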